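/- Let G be a discrete group such that every finitely generated subgroup H ≤ G is residually finite and has a subnormal series {1} = H₀ ⊴ H₁ ⊴ ⋯ ⊴ Hₙ = H in which each quotient H_{i+1}/H_i is locally virtually abelian (every finitely generated subgroup of H_{i+1}/H_i has an abelian subgroup of finite index). Let (G, X, 0) be an expansive 0-gluing pointed dynamical system whose homoclinic points are dense in X. Then every asymptotically nilpotent endomorphism f : X → X of (G, X, 0) is nilpotent. -/

import Mathlib

/-- A group is virtually abelian if it has an abelian subgroup of finite index. -/
def VirtuallyAbelian (H : Type) [Group H] : Prop :=
  ∃ A : Subgroup H, A.FiniteIndex ∧ ∀ x y : A, x * y = y * x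

/-- A group is locally virtually abelian if each of its finitely generated subgroups
is virtually abelian. -/
def LocallyVirtuallyAbelian (H : Type) [Group H] : Prop :=
  ∀ K : Subgroup H, K.FG → VirtuallyAbelian K

/-- A group is residually finite if every nontrivial element survives in some finite
quotient. -/
def ResiduallyFinite (H : Type) [Group H] : Prop :=
  ∀ g : H, g ≠ 1 → ∃ (Q : Type) (_ : Group Q) (φ : H →* Q), Finite Q ∧ φ g ≠ 1

/-- `H` has a subnormal series `{1} = H₀ ⊴ H₁ ⊴ ⋯ ⊴ Hₙ = H` in which every quotient
`H_{i+1}/H_i` is locally virtually abelian. -/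
def HasLVASubnormalSeries (H : Type) [Group H] : Prop :=
  ∃ (n : ℕ) (c : Fin (n + 1) → Subgroup H),
    c 0 = ⊥ ∧ c (Fin.last n) = ⊤ ∧
    ∀ i : Fin n, c i.castSucc ≤ c i.succ ∧
      ∃ _ : ((c i.castSucc).subgroupOf (c i.succ)).Normal,
        LocallyVirtuallyAbelian
          (↥(c i.succ) ⧸ (c i.castSucc).subgroupOf (c i.succ))

/-- A point `x` is homoclinic: `g • x` is eventually close to `x₀` outside finite
subsets of `G`. -/
def Homoclinic (G : Type) [Group G] {X : Type} [MetricSpace X] [MulAction G X]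
    (x₀ x : X) : Prop :=
  ∀ ε : ℝ, 0 < ε → ∃ E : Finset G, ∀ g : G, g ∉ E → dist (g • x) x₀ < ε

/-- The `0`-gluing property of a pointed dynamical system. -/
def ZeroGluing (G : Type) [Group G] {X : Type} [MetricSpace X] [MulAction G X]
    (x₀ : X) : Prop :=
  ∀ ε : ℝ, 0 < ε → ∃ δ : ℝ, 0 < δ ∧ ∃ E : Finset G,
    ∀ (I : Type) (A : I → Set G) (p : I → X),
      (∀ g : G, ∃! i : I, g ∈ A i) →
      (∀ i : I, ∀ g ∈ A i, (∃ e ∈ E, e * g ∉ A i) → dist (g • p i) x₀ < δ) →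
      ∃ y : X, ∀ i : I, ∀ g ∈ A i, dist (g • y) (g • p i) < ε

section NSysProof
open scoped Pointwise
open Filter Topology

theorem unifexp_gen {G X : Type} [Group G] [MetricSpace X] [CompactSpace X] [MulAction G X]
    (hcont : ∀ g : G, Continuous fun x : X => g • x) {Δ : ℝ}
    (hexp : ∀ x y : X, (∀ g : G, dist (g • x) (g • y) ≤ Δ) → x = y)
    {η : ℝ} (hη : 0 < η) : ∃ B : Set G, B.Finite ∧
    ∀ x y : X, (∀ g ∈ B, dist (g • x) (g • y) ≤ Δ) → dist x y < η := by
  have hK : IsCompact {p : X × X | η ≤ dist p.1 p.2} :=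
    (isClosed_le continuous_const (continuous_fst.dist continuous_snd)).isCompact
  obtain ⟨u, hu⟩ := hK.elim_finite_subfamily_closed
    (fun g : G => {p : X × X | dist (g • p.1) (g • p.2) ≤ Δ})
    (fun g => isClosed_le (((hcont g).comp continuous_fst).dist
      ((hcont g).comp continuous_snd)) continuous_const)
    (by
      ext ⟨x, y⟩
      simp only [Set.mem_inter_iff, Set.mem_ofPred_eq, Set.mem_iInter, Set.mem_empty_iff_false,
        iff_false, not_and]
      intro h1 h2
      have := hexp x y h2
      rw [this, dist_self] at h1
      linarith)
  refine ⟨u, u.finite_toSet, fun x y h => ?_⟩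
  by_contra! hc
  have : (x, y) ∈ ({p : X × X | η ≤ dist p.1 p.2} ∩
      ⋂ g ∈ u, {p : X × X | dist (g • p.1) (g • p.2) ≤ Δ}) := by
    refine ⟨hc, ?_⟩
    simp only [Set.mem_iInter]
    exact fun g hg => h g hg
  rw [hu] at this
  exact this

/-- Bundled data of an expansive system with a gluing scale. -/
structure NSys (G X : Type) [Group G] [MetricSpace X] [CompactSpace X] [MulAction G X] where
  x₀ : X
  f : X → X
  ε : ℝ
  Q : Set G
  εpos : 0 < ε
  cont_smul : ∀ g : G, Continuous fun x : X => g • x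
  smul_zero : ∀ g : G, g • x₀ = x₀
  contf : Continuous f
  f0 : f x₀ = x₀
  feq : ∀ (g : G) (x : X), f (g • x) = g • f x
  AN : ∀ x : X, Tendsto (fun n => f^[n] x) atTop (𝓝 x₀)
  exp : ∀ x y : X, (∀ g : G, dist (g • x) (g • y) ≤ 4 * ε) → x = y
  Qfin : Q.Finite
  Qone : (1 : G) ∈ Q
  Qinv : ∀ q ∈ Q, q⁻¹ ∈ Q
  hQ : ∀ x y : X, (∀ q ∈ Q, dist (q • x) (q • y) ≤ 4 * ε) →
    dist x y ≤ ε / 2 ∧ dist (f x) (f y) ≤ ε / 2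
  glue : ∀ (I : Type) (a : G → I) (p : I → X),
    (∀ g, (∀ q ∈ Q, a (q * g) = a g) ∨
      ∀ q ∈ Q, ∀ q' ∈ Q, dist ((q * g) • p (a (q' * g))) x₀ ≤ ε) →
    ∃ y : X, ∀ g, dist (g • y) (g • p (a g)) ≤ ε

namespace NSys
variable {G X : Type} [Group G] [MetricSpace X] [CompactSpace X] [MulAction G X]
variable (S : NSys G X)

def supp (y : X) : Set G := {g | S.ε < dist (g • y) S.x₀}

def Mortal (y : X) : Prop := ∃ n, S.f^[n] y = S.x₀

def Clean {I : Type} (a : G → I) (p : I → X) : Prop :=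
  ∀ g, (∀ q ∈ S.Q, a (q * g) = a g) ∨
      ∀ q ∈ S.Q, ∀ q' ∈ S.Q, dist ((q * g) • p (a (q' * g))) S.x₀ ≤ S.ε

def Real {I : Type} (a : G → I) (p : I → X) (y : X) : Prop :=
  ∀ g, dist (g • y) (g • p (a g)) ≤ S.ε

theorem notMem_supp {y : X} {g : G} : g ∉ S.supp y ↔ dist (g • y) S.x₀ ≤ S.ε := by
  simp [supp]

theorem mem_supp_smul {y : X} {g h : G} : g ∈ S.supp (h • y) ↔ g * h ∈ S.supp y := by
  simp [supp, mul_smul]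

theorem iter_zero (n : ℕ) : S.f^[n] S.x₀ = S.x₀ := Function.iterate_fixed S.f0 n

theorem iter_eq (n : ℕ) (g : G) (x : X) : S.f^[n] (g • x) = g • S.f^[n] x := by
  induction n generalizing x with
  | zero => rfl
  | succ n ih => simp [Function.iterate_succ_apply, S.feq, ih]

theorem supp_zero : S.supp S.x₀ = ∅ := by
  ext g; simp [supp, S.smul_zero, S.εpos.le]

theorem eq_zero {y : X} (h : S.supp y = ∅) : y = S.x₀ := by
  apply S.exp
  intro g
  have : g ∉ S.supp y := by simp [h]
  rw [notMem_supp] at this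
  rw [S.smul_zero]
  linarith [S.εpos]

theorem mortal_of_iter {y : X} {m : ℕ} (h : S.Mortal (S.f^[m] y)) : S.Mortal y := by
  obtain ⟨n, hn⟩ := h
  exact ⟨n + m, by rw [Function.iterate_add_apply, hn]⟩

theorem zero_of_le {y : X} {m n : ℕ} (h : S.f^[m] y = S.x₀) (hmn : m ≤ n) :
    S.f^[n] y = S.x₀ := by
  obtain ⟨k, rfl⟩ := Nat.exists_eq_add_of_le hmn
  rw [add_comm, Function.iterate_add_apply, h, S.iter_zero]

theorem mortal_smul {y : X} (h : S.Mortal y) (g : G) : S.Mortal (g • y) := by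
  obtain ⟨n, hn⟩ := h
  exact ⟨n, by rw [S.iter_eq, hn, S.smul_zero]⟩

/-- powers of `Q` -/
theorem powmem {a b : ℕ} {u v : G} (hu : u ∈ S.Q ^ a) (hv : v ∈ S.Q ^ b) :
    u * v ∈ S.Q ^ (a + b) := by
  rw [pow_add]; exact Set.mul_mem_mul hu hv

theorem powmono {a b : ℕ} (h : a ≤ b) : S.Q ^ a ⊆ S.Q ^ b :=
  Set.pow_subset_pow_right S.Qone h

theorem mem1 {q : G} (hq : q ∈ S.Q) : q ∈ S.Q ^ 1 := by simpa using hq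

theorem one_mem_pow (a : ℕ) : (1 : G) ∈ S.Q ^ a := by
  have := S.powmono (Nat.zero_le a)
  apply this; simp

theorem Q_inv_eq : S.Q⁻¹ = S.Q := by
  ext g
  rw [Set.mem_inv]
  exact ⟨fun h => by simpa using S.Qinv _ h, fun h => S.Qinv _ h⟩

theorem powinv {a : ℕ} {u : G} (hu : u ∈ S.Q ^ a) : u⁻¹ ∈ S.Q ^ a := by
  have h : (S.Q ^ a)⁻¹ = S.Q ^ a := by rw [← inv_pow, S.Q_inv_eq]
  rw [← h]; simpa using hu

theorem powfin (a : ℕ) : (S.Q ^ a).Finite := by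
  induction a with
  | zero => simp
  | succ n ih => rw [pow_succ]; exact ih.mul S.Qfin

theorem supp_f {y : X} {g : G} (h : g ∈ S.supp (S.f y)) : ∃ q ∈ S.Q, q * g ∈ S.supp y := by
  by_contra! hc
  have := (S.hQ (g • y) S.x₀ (fun q hq => by
    have := hc q hq
    rw [notMem_supp, mul_smul] at this
    rw [S.smul_zero]; linarith [S.εpos])).2
  rw [S.feq, S.f0] at this
  have h' : S.ε < dist (g • S.f y) S.x₀ := h
  linarith [S.εpos]

theorem supp_iter {y : X} {n : ℕ} {g : G} (h : g ∈ S.supp (S.f^[n] y)) :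
    ∃ u ∈ S.Q ^ n, u * g ∈ S.supp y := by
  induction n generalizing g with
  | zero => exact ⟨1, by simp, by simpa using h⟩
  | succ n ih =>
    rw [Function.iterate_succ_apply'] at h
    obtain ⟨q, hq, hq'⟩ := S.supp_f h
    obtain ⟨u, hu, hu'⟩ := ih hq'
    exact ⟨u * q, S.powmem hu (S.mem1 hq), by rwa [mul_assoc]⟩

theorem agree_iter {x y : X} {n : ℕ} (h : ∀ u ∈ S.Q ^ n, dist (u • x) (u • y) ≤ 4 * S.ε) :
    dist (S.f^[n] x) (S.f^[n] y) ≤ 4 * S.ε := by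
  induction n generalizing x y with
  | zero => simpa using h 1 (by simp)
  | succ n ih =>
    rw [Function.iterate_succ_apply, Function.iterate_succ_apply]
    apply ih
    intro u hu
    have := (S.hQ (u • x) (u • y) (fun q hq => by
      rw [← mul_smul, ← mul_smul]
      apply h
      have := S.powmem (S.mem1 hq) hu
      rwa [add_comm] at this)).2
    rw [S.feq, S.feq] at this
    linarith [S.εpos]

theorem agree_iter' {x y : X} {n : ℕ} {g : G}
    (h : ∀ u ∈ S.Q ^ (n + 1), dist ((u * g) • x) ((u * g) • y) ≤ 4 * S.ε) :
    dist (g • S.f^[n] x) (g • S.f^[n] y) ≤ S.ε / 2 := by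
  refine (S.hQ _ _ fun q hq => ?_).1
  rw [← mul_smul, ← mul_smul, ← S.iter_eq, ← S.iter_eq]
  apply S.agree_iter
  intro u hu
  rw [← mul_smul, ← mul_smul, ← mul_assoc]
  exact h _ (S.powmem hu (S.mem1 hq))

theorem real_f {I : Type} {a : G → I} {p : I → X} {y : X} (hc : S.Clean a p)
    (hr : S.Real a p y) : S.Real a (fun i => S.f (p i)) (S.f y) := by
  have he := S.εpos
  intro g
  rcases hc g with h | h
  · have := (S.hQ (g • y) (g • p (a g)) (fun q hq => by
      have := hr (q * g)
      rw [h q hq] at this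
      rw [← mul_smul, ← mul_smul]; linarith)).2
    rw [S.feq, S.feq] at this
    linarith
  · have h1 := (S.hQ (g • y) S.x₀ (fun q hq => by
      have h2 := hr (q * g)
      have h3 := h q hq q hq
      have := dist_triangle ((q * g) • y) ((q * g) • p (a (q * g))) S.x₀
      rw [← mul_smul, S.smul_zero]; linarith)).2
    have h2 := (S.hQ (g • p (a g)) S.x₀ (fun q hq => by
      have h3 := h q hq 1 S.Qone
      rw [one_mul] at h3
      rw [← mul_smul, S.smul_zero]; linarith)).2
    rw [S.feq, S.f0] at h1 h2
    have := dist_triangle_right (g • S.f y) (g • S.f (p (a g))) S.x₀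
    show dist (g • S.f y) (g • S.f (p (a g))) ≤ S.ε
    linarith

theorem real_iter {I : Type} {a : G → I} {p : I → X} {y : X} (n : ℕ)
    (hc : ∀ m < n, S.Clean a (fun i => S.f^[m] (p i)))
    (hr : S.Real a p y) : S.Real a (fun i => S.f^[n] (p i)) (S.f^[n] y) := by
  induction n with
  | zero => simpa using hr
  | succ n ih =>
    have := S.real_f (hc n (by omega)) (ih (fun m hm => hc m (by omega)))
    simpa only [Function.iterate_succ_apply'] using this

theorem real_unique {I : Type} {a : G → I} {p : I → X} {y y' : X}
    (hr : S.Real a p y) (hr' : S.Real a p y') : y = y' := by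
  apply S.exp
  intro g
  have := dist_triangle_right (g • y) (g • y') (g • p (a g))
  linarith [hr g, hr' g, S.εpos]

theorem real_supp {I : Type} {a : G → I} {p : I → X} {y : X}
    (hr : S.Real a p y) {g : G} (hg : g ∈ S.supp y) :
    ∃ q ∈ S.Q, q * g ∈ S.supp (p (a (q * g))) := by
  by_contra! hc
  have := (S.hQ (g • y) S.x₀ (fun q hq => by
    have h1 := hc q hq
    rw [notMem_supp] at h1
    have h2 := hr (q * g)
    have := dist_triangle ((q * g) • y) ((q * g) • p (a (q * g))) S.x₀
    rw [← mul_smul, S.smul_zero]; linarith [S.εpos])).1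
  have h' : S.ε < dist (g • y) S.x₀ := hg
  linarith [S.εpos]

theorem unifexp {η : ℝ} (hη : 0 < η) : ∃ B : Set G, B.Finite ∧
    ∀ x y : X, (∀ g ∈ B, dist (g • x) (g • y) ≤ 4 * S.ε) → dist x y < η :=
  unifexp_gen S.cont_smul S.exp hη

theorem eventually_zero (y : X) (W : Set G) (hW : W.Finite) :
    ∃ m, ∀ n ≥ m, ∀ c ∈ W, dist (c • S.f^[n] y) S.x₀ ≤ S.ε := by
  have : ∀ᶠ n in atTop, ∀ c ∈ W, dist (c • S.f^[n] y) S.x₀ ≤ S.ε := by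
    rw [hW.eventually_all]
    intro c _
    have h1 : Tendsto (fun n => c • S.f^[n] y) atTop (𝓝 (c • S.x₀)) :=
      ((S.cont_smul c).tendsto _).comp (S.AN y)
    rw [S.smul_zero] at h1
    have h2 := h1.eventually (Metric.ball_mem_nhds S.x₀ S.εpos)
    filter_upwards [h2] with n hn
    exact (Metric.mem_ball.1 hn).le
  exact eventually_atTop.1 this

theorem isClosed_cond (c : G) (n : ℕ) :
    IsClosed {y : X | dist (c • S.f^[n] y) S.x₀ ≤ S.ε} := by
  apply isClosed_le _ continuous_const
  exact ((S.cont_smul c).comp (S.contf.iterate n)).dist continuous_const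

theorem baire (P : Set X) (hP : P.Nonempty) (W : Set G) (hW : W.Finite) :
    ∃ z ∈ P, ∃ B : Set G, B.Finite ∧ ∃ m : ℕ, ∀ z' ∈ P,
      (∀ g ∈ B, dist (g • z') (g • z) ≤ 4 * S.ε) →
      ∀ n ≥ m, ∀ c ∈ W, dist (c • S.f^[n] z') S.x₀ ≤ S.ε := by
  let Y := closure P
  have : CompactSpace Y := isCompact_iff_compactSpace.1 isClosed_closure.isCompact
  have : Nonempty Y := hP.closure.to_subtype
  let F : ℕ → Set Y := fun m =>
    {y | ∀ n ≥ m, ∀ c ∈ W, dist (c • S.f^[n] (y : X)) S.x₀ ≤ S.ε}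
  have hF : ∀ m, IsClosed (F m) := by
    intro m
    have : F m = ⋂ n ≥ m, ⋂ c ∈ W,
        ((↑) : Y → X) ⁻¹' {y : X | dist (c • S.f^[n] y) S.x₀ ≤ S.ε} := by
      ext y; simp [F]
    rw [this]
    refine isClosed_biInter fun n _ => isClosed_biInter fun c _ => ?_
    exact (S.isClosed_cond c n).preimage continuous_subtype_val
  have hU : ⋃ m, F m = Set.univ := by
    ext y
    simp only [Set.mem_iUnion, Set.mem_univ, iff_true]
    exact S.eventually_zero y W hW
  obtain ⟨m, y, hy⟩ := nonempty_interior_of_iUnion_of_closed hF hU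
  obtain ⟨O, hO, hOeq⟩ := isOpen_induced_iff.1 (isOpen_interior (s := F m))
  have hyO : (y : X) ∈ O := by rw [← hOeq] at hy; exact hy
  obtain ⟨z, hzO, hzP⟩ := mem_closure_iff.1 y.2 O hO hyO
  obtain ⟨η, hη, hball⟩ := Metric.isOpen_iff.1 hO z hzO
  obtain ⟨B, hB, hB'⟩ := S.unifexp hη
  refine ⟨z, hzP, B, hB, m, fun z' hz' hc => ?_⟩
  have h1 : z' ∈ O := hball (hB' _ _ hc)
  have h2 : (⟨z', subset_closure hz'⟩ : Y) ∈ interior (F m) := by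
    rw [← hOeq]; exact h1
  exact interior_subset h2

theorem lim {y : X} {c : G} {n : ℕ}
    (h : ∀ B : Set G, B.Finite → ∃ y', (∀ g ∈ B, dist (g • y') (g • y) ≤ 4 * S.ε) ∧
      dist (c • S.f^[n] y') S.x₀ ≤ S.ε) :
    dist (c • S.f^[n] y) S.x₀ ≤ S.ε := by
  have := (S.isClosed_cond c n).closure_eq
  change y ∈ {y : X | dist (c • S.f^[n] y) S.x₀ ≤ S.ε}
  rw [← this, Metric.mem_closure_iff]
  intro η hη
  obtain ⟨B, hB, hB'⟩ := S.unifexp hη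
  obtain ⟨y', h1, h2⟩ := h B hB
  exact ⟨y', h2, by rw [dist_comm]; exact hB' _ _ h1⟩

theorem mortal_of_bounded (L : Subgroup G) {y : X} (hL : ∀ l ∈ L, l • y = y)
    (T : Set G) (hT : T.Finite) (h : ∀ n, S.supp (S.f^[n] y) ⊆ T * (L : Set G)) :
    S.Mortal y := by
  obtain ⟨m, hm⟩ := S.eventually_zero y T hT
  refine ⟨m, S.eq_zero ?_⟩
  ext g
  simp only [Set.mem_empty_iff_false, iff_false]
  intro hg
  obtain ⟨t, ht, l, hl, rfl⟩ := Set.mem_mul.1 (h m hg)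
  have h1 := hm m le_rfl t ht
  have h2 : S.ε < dist ((t * l) • S.f^[m] y) S.x₀ := hg
  rw [mul_smul, ← S.iter_eq, hL l hl] at h2
  linarith

end NSys

namespace NSys
variable {G X : Type} [Group G] [MetricSpace X] [CompactSpace X] [MulAction G X]
variable (S : NSys G X)

theorem real_exists {I : Type} {a : G → I} {p : I → X} (hc : S.Clean a p) :
    ∃ y, S.Real a p y := S.glue I a p hc

open Classical in
theorem lemA (K : Subgroup G) (W : Set G) (hW : W.Finite) :
    ∃ D : Set G, D.Finite ∧ ∃ N : ℕ, ∀ y : X, S.Mortal y →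
      (∃ T : Set G, T.Finite ∧ S.supp y ⊆ T * (K : Set G)) →
      (∀ d ∈ D, ∀ k ∈ K, d * k ∉ S.supp y) →
      ∀ n ≥ N, ∀ c ∈ W, dist (c • S.f^[n] y) S.x₀ ≤ S.ε := by
  obtain ⟨z, ⟨⟨τ, hτ⟩, S0, hS0, hzS⟩, B, hB, m, hm⟩ := S.baire
    {y | S.Mortal y ∧ ∃ T : Set G, T.Finite ∧ S.supp y ⊆ T * (K : Set G)}
    ⟨S.x₀, ⟨0, rfl⟩, ∅, Set.finite_empty, by simp [S.supp_zero]⟩ W hW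
  set S' : Set G := S.Q ^ τ * (S0 ∪ B) with hS'
  have hS'fin : S'.Finite := (S.powfin τ).mul (hS0.union hB)
  refine ⟨S.Q ^ (τ + 4) * S', (S.powfin _).mul hS'fin, max m τ, ?_⟩
  intro y hy ⟨T, hT, hyT⟩ hD n hn c hc
  set A : Set G := {g | ∃ u ∈ S.Q ^ 2, ∃ s ∈ S', ∃ k ∈ K, g = u * s * k} with hA
  let a : G → Bool := fun g => decide (g ∈ A)
  let p : Bool → X := fun b => if b then z else y
  have hz : ∀ i ≤ τ, ∀ g ∈ S.supp (S.f^[i] z), ∃ s ∈ S', ∃ k ∈ K, g = s * k := by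
    intro i hi g hg
    obtain ⟨u, hu, hu'⟩ := S.supp_iter hg
    obtain ⟨s, hs, k, hk, hsk⟩ := Set.mem_mul.1 (hzS hu')
    refine ⟨u⁻¹ * s, Set.mul_mem_mul (S.powmono hi (S.powinv hu)) (Or.inl hs), k, hk, ?_⟩
    rw [mul_assoc, hsk]; group
  have hyA : ∀ i ≤ τ, ∀ g ∈ S.supp (S.f^[i] y), ∀ v ∈ S.Q ^ 2, v * g ∉ A := by
    rintro i hi g hg v hv ⟨w, hw, s, hs, k, hk, he⟩
    obtain ⟨u, hu, hu'⟩ := S.supp_iter hg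
    refine hD (u * v⁻¹ * w * s) ?_ k hk ?_
    · refine Set.mul_mem_mul ?_ hs
      have := S.powmem (S.powmem (S.powmono hi hu) (S.powinv hv)) hw
      simpa [add_assoc] using this
    · have : g = v⁻¹ * (w * s * k) := by rw [← he]; group
      rw [this] at hu'
      convert hu' using 1
      group
  have hclean : ∀ i ≤ τ, S.Clean a (fun b => S.f^[i] (p b)) := by
    intro i hi g
    by_cases h1 : ∃ q ∈ S.Q, q * g ∈ S.supp (S.f^[i] z)
    · left
      obtain ⟨q, hq, hqg⟩ := h1
      obtain ⟨s, hs, k, hk, he⟩ := hz i hi _ hqg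
      have : ∀ q' ∈ S.Q, q' * g ∈ A := fun q' hq' =>
        ⟨q' * q⁻¹, S.powmem (S.mem1 hq') (S.powinv (S.mem1 hq)), s, hs, k, hk, by
          rw [mul_assoc, ← he]; group⟩
      have h0 : g ∈ A := by simpa using this 1 S.Qone
      intro q' hq'
      simp [a, this q' hq', h0]
    by_cases h2 : ∃ q ∈ S.Q, q * g ∈ S.supp (S.f^[i] y)
    · left
      obtain ⟨q, hq, hqg⟩ := h2
      have : ∀ q' ∈ S.Q, q' * g ∉ A := fun q' hq' => by
        have := hyA i hi _ hqg (q' * q⁻¹) (S.powmem (S.mem1 hq') (S.powinv (S.mem1 hq)))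
        rwa [mul_assoc, inv_mul_cancel_left] at this
      have h0 : g ∉ A := by simpa using this 1 S.Qone
      intro q' hq'
      simp [a, this q' hq', h0]
    · right
      push Not at h1 h2
      intro q hq q' hq'
      have e1 := h1 q hq
      have e2 := h2 q hq
      rw [notMem_supp] at e1 e2
      cases a (q' * g)
      · simpa [p] using e2
      · simpa [p] using e1
  obtain ⟨z', hz'⟩ := S.real_exists (by simpa using hclean 0 (Nat.zero_le _))
  have h1 := S.real_iter τ (fun i hi => hclean i hi.le) hz'
  have h2 : S.Real a (fun b => S.f^[τ] (p b)) (S.f^[τ] y) := by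
    intro g
    by_cases hg : g ∈ A
    · simp only [a, p, hg, decide_true, if_true, hτ, S.smul_zero]
      by_contra! hcon
      exact hyA τ le_rfl g hcon 1 (S.one_mem_pow 2) (by simpa using hg)
    · simp [a, p, hg, S.εpos.le]
  have h3 : S.f^[τ] z' = S.f^[τ] y := S.real_unique h1 h2
  have h4 : ∀ n ≥ τ, S.f^[n] z' = S.f^[n] y := by
    intro n hn
    obtain ⟨k, rfl⟩ := Nat.exists_eq_add_of_le hn
    rw [add_comm, Function.iterate_add_apply, h3, ← Function.iterate_add_apply]
  have h5 : S.Mortal z' := by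
    obtain ⟨k, hk⟩ := hy
    refine ⟨max k τ, ?_⟩
    rw [h4 _ (le_max_right _ _)]
    exact S.zero_of_le hk (le_max_left _ _)
  have h6 : S.supp z' ⊆ (S.Q * (S0 ∪ T)) * (K : Set G) := by
    intro g hg
    obtain ⟨q, hq, hq'⟩ := S.real_supp hz' hg
    have : q * g ∈ (S0 ∪ T) * (K : Set G) := by
      revert hq'
      cases a (q * g)
      · intro h
        exact Set.mul_subset_mul_right Set.subset_union_right (hyT (by simpa [p] using h))
      · intro h
        exact Set.mul_subset_mul_right Set.subset_union_left (hzS (by simpa [p] using h))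
    rw [mul_assoc]
    exact ⟨q⁻¹, S.Qinv q hq, q * g, this, by simp⟩
  rw [← h4 n (le_trans (le_max_right _ _) hn)]
  refine hm z' ⟨h5, _, S.Qfin.mul (hS0.union hT), h6⟩ ?_ n (le_trans (le_max_left _ _) hn) c hc
  intro g hg
  have hgA : g ∈ A := ⟨1, S.one_mem_pow 2, g,
    ⟨1, S.one_mem_pow τ, g, Or.inr hg, by simp⟩, 1, K.one_mem, by simp⟩
  have := hz' g
  simp only [a, p, hgA, decide_true, if_true] at this
  linarith [S.εpos]

/-! ### Sums of translates -/

def IsSum (x : X) (V Ξ : Set G) (y : X) : Prop :=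
  (∀ ξ ∈ Ξ, ∀ v ∈ V, dist ((v * ξ) • y) (v • x) ≤ S.ε) ∧
  ∀ g, (∀ ξ ∈ Ξ, ∀ v ∈ V, g ≠ v * ξ) → dist (g • y) S.x₀ ≤ S.ε

def Sep (V Ξ : Set G) : Prop :=
  ∀ ξ ∈ Ξ, ∀ ξ' ∈ Ξ, ∀ v ∈ V, ∀ v' ∈ V, v * ξ = v' * ξ' → ξ = ξ'

def Cov (x : X) (V : Set G) : Prop := V.Finite ∧ ∀ u ∈ S.Q ^ 2, ∀ g ∈ S.supp x, u * g ∈ V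

variable {S} {x : X} {V Ξ : Set G}

theorem Sep.mono {Ξ' : Set G} (h : Sep V Ξ) (hs : Ξ' ⊆ Ξ) : Sep V Ξ' :=
  fun ξ h1 ξ' h2 => h ξ (hs h1) ξ' (hs h2)

theorem Sep.smul (h : Sep V Ξ) (k : G) : Sep V {g | g * k ∈ Ξ} := by
  intro ξ h1 ξ' h2 v hv v' hv' he
  have := h _ h1 _ h2 v hv v' hv' (by rw [← mul_assoc, he, mul_assoc])
  exact mul_right_cancel this

open Classical in
theorem exists_isSum (hV : S.Cov x V) (hΞ : Sep V Ξ) : ∃ y, S.IsSum x V Ξ y := by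
  let a : G → Option G := fun g =>
    if h : ∃ ξ ∈ Ξ, ∃ v ∈ V, g = v * ξ then some h.choose else none
  let p : Option G → X := fun o => match o with
    | none => S.x₀
    | some ξ => ξ⁻¹ • x
  have ha : ∀ ξ ∈ Ξ, ∀ v ∈ V, a (v * ξ) = some ξ := by
    intro ξ hξ v hv
    have h : ∃ ξ' ∈ Ξ, ∃ v' ∈ V, v * ξ = v' * ξ' := ⟨ξ, hξ, v, hv, rfl⟩
    simp only [a, dif_pos h, Option.some.injEq]
    obtain ⟨h1, v', hv', h2⟩ := h.choose_spec
    exact (hΞ _ hξ _ h1 v hv v' hv' h2).symm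
  have hn : ∀ g, (∀ ξ ∈ Ξ, ∀ v ∈ V, g ≠ v * ξ) → a g = none := by
    intro g hg
    simp only [a]
    rw [dif_neg]
    rintro ⟨ξ, hξ, v, hv, h⟩
    exact hg ξ hξ v hv h
  have hmem : ∀ g ξ, a g = some ξ → ξ ∈ Ξ := by
    intro g ξ h
    by_cases hh : ∃ ξ ∈ Ξ, ∃ v ∈ V, g = v * ξ
    · simp only [a, dif_pos hh, Option.some.injEq] at h
      rw [← h]; exact hh.choose_spec.1
    · simp only [a, dif_neg hh] at h
      cases h
  have hclean : S.Clean a p := by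
    intro g
    by_cases h : ∃ q ∈ S.Q, ∃ ξ ∈ Ξ, q * g ∈ S.supp (ξ⁻¹ • x)
    · left
      obtain ⟨q, hq, ξ, hξ, hm⟩ := h
      rw [mem_supp_smul] at hm
      have : ∀ q' ∈ S.Q, a (q' * g) = some ξ := by
        intro q' hq'
        have h1 := hV.2 (q' * q⁻¹) (S.powmem (S.mem1 hq') (S.powinv (S.mem1 hq))) _ hm
        have h2 := ha ξ hξ _ h1
        rw [← h2]; congr 1; group
      intro q' hq'
      rw [this q' hq']
      simpa using (this 1 S.Qone).symm
    · right
      push Not at h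
      intro q hq q' hq'
      rcases hh : a (q' * g) with _ | ξ
      · simp [p, S.smul_zero, S.εpos.le]
      · have := h q hq ξ (hmem _ _ hh)
        rwa [notMem_supp] at this
  obtain ⟨y, hy⟩ := S.real_exists hclean
  refine ⟨y, fun ξ hξ v hv => ?_, fun g hg => ?_⟩
  · have := hy (v * ξ)
    rw [ha ξ hξ v hv] at this
    simpa [p, ← mul_smul] using this
  · have := hy g
    rw [hn g hg] at this
    simpa [p, S.smul_zero] using this

theorem IsSum.close {y y' : X} {Ξ' : Set G} (h : S.IsSum x V Ξ y) (h' : S.IsSum x V Ξ' y')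
    {g : G} (hg : ∀ v ∈ V, v⁻¹ * g ∈ Ξ ↔ v⁻¹ * g ∈ Ξ') :
    dist (g • y) (g • y') ≤ 2 * S.ε := by
  by_cases hh : ∃ ξ ∈ Ξ, ∃ v ∈ V, g = v * ξ
  · obtain ⟨ξ, hξ, v, hv, rfl⟩ := hh
    have h1 := h.1 ξ hξ v hv
    have h2 := h'.1 ξ (by simpa using (hg v hv).1 (by simpa using hξ)) v hv
    linarith [dist_triangle_right ((v * ξ) • y) ((v * ξ) • y') (v • x)]
  · push Not at hh
    have h1 := h.2 g hh
    have h2 := h'.2 g (fun ξ hξ v hv he => by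
      refine hh ξ ?_ v hv he
      have := (hg v hv).2 (by rw [he]; simpa using hξ)
      rw [he] at this
      simpa using this)
    linarith [dist_triangle_right (g • y) (g • y') S.x₀]

theorem IsSum.unique {y y' : X} (h : S.IsSum x V Ξ y) (h' : S.IsSum x V Ξ y') : y = y' := by
  apply S.exp
  intro g
  linarith [h.close h' (g := g) (fun _ _ => Iff.rfl), S.εpos]

theorem IsSum.smul {y : X} (h : S.IsSum x V Ξ y) (k : G) :
    S.IsSum x V {g | g * k ∈ Ξ} (k • y) := by
  refine ⟨fun ξ hξ v hv => ?_, fun g hg => ?_⟩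
  · have := h.1 _ hξ v hv
    rwa [← mul_assoc, mul_smul] at this
  · rw [← mul_smul]
    apply h.2
    intro ξ hξ v hv he
    refine hg (ξ * k⁻¹) (by simpa using hξ) v hv ?_
    rw [← mul_assoc, ← he]; group

theorem IsSum.fixed {y : X} (h : S.IsSum x V Ξ y) {k : G} (hk : ∀ g, g * k ∈ Ξ ↔ g ∈ Ξ) :
    k • y = y := by
  have := h.smul k
  simp only [hk] at this
  exact this.unique h

theorem isSum_self (hV : S.Cov x V) : S.IsSum x V {1} x := by
  refine ⟨fun ξ hξ v hv => ?_, fun g hg => ?_⟩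
  · rw [Set.mem_singleton_iff.1 hξ, mul_one, dist_self]; exact S.εpos.le
  · by_contra! hc
    exact hg 1 rfl g (by simpa using hV.2 1 (S.one_mem_pow 2) g hc) (by simp)

theorem IsSum.supp {y : X} (h : S.IsSum x V Ξ y) : S.supp y ⊆ V * Ξ := by
  intro g hg
  by_contra hc
  have := h.2 g (fun ξ hξ v hv he => hc ⟨v, hv, ξ, hξ, he.symm⟩)
  have h' : S.ε < dist (g • y) S.x₀ := hg
  linarith

theorem IsSum.supp_iter {y : X} (h : S.IsSum x V Ξ y) (n : ℕ) :
    S.supp (S.f^[n] y) ⊆ S.Q ^ n * V * Ξ := by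
  intro g hg
  obtain ⟨u, hu, hu'⟩ := S.supp_iter hg
  rw [mul_assoc]
  exact ⟨u⁻¹, S.powinv hu, _, h.supp hu', by simp⟩

end NSys

namespace NSys
variable {G X : Type} [Group G] [MetricSpace X] [CompactSpace X] [MulAction G X]

def BB (S : NSys G X) (x : X) (V : Set G) (K : Subgroup G) : Prop :=
  ∃ F : Set G, F.Finite ∧ ∀ Ξ : Set G, Ξ ⊆ K → Ξ.Finite → Sep V Ξ → ∀ y, S.IsSum x V Ξ y →
    ∀ n, S.supp (S.f^[n] y) ⊆ F * (K : Set G)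

variable {S : NSys G X} {x : X} {V : Set G}

theorem IsSum.approx {Ξ : Set G} {y : X} (hV : S.Cov x V) (hy : S.IsSum x V Ξ y)
    (hΞ : Sep V Ξ) {B : Set G} (hB : B.Finite) :
    ∃ Ξ' ⊆ Ξ, Ξ'.Finite ∧ ∃ y', S.IsSum x V Ξ' y' ∧
      ∀ g ∈ B, dist (g • y') (g • y) ≤ 4 * S.ε := by
  have hfin : (Ξ ∩ (V⁻¹ * B)).Finite := ((hV.1.inv).mul hB).subset Set.inter_subset_right
  obtain ⟨y', hy'⟩ := exists_isSum hV (hΞ.mono (Set.inter_subset_left (t := V⁻¹ * B)))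
  refine ⟨_, Set.inter_subset_left, hfin, y', hy', fun g hg => ?_⟩
  have := hy'.close hy (g := g) (fun v hv => ⟨fun h => h.1, fun h =>
    ⟨h, Set.mul_mem_mul (Set.inv_mem_inv.2 hv) hg⟩⟩)
  linarith [S.εpos]

theorem BB.all {K : Subgroup G} (hV : S.Cov x V) (h : S.BB x V K) :
    ∃ F : Set G, F.Finite ∧ ∀ Ξ : Set G, Ξ ⊆ K → Sep V Ξ → ∀ y, S.IsSum x V Ξ y →
    ∀ n, S.supp (S.f^[n] y) ⊆ F * (K : Set G) := by
  obtain ⟨F, hF, h⟩ := h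
  refine ⟨F, hF, fun Ξ hK hΞ y hy n g hg => ?_⟩
  by_contra hc
  refine absurd hg ?_
  rw [notMem_supp]
  apply S.lim
  intro B hB
  obtain ⟨Ξ', hs, hf, y', hy', hcl⟩ := hy.approx hV hΞ hB
  refine ⟨y', hcl, ?_⟩
  rw [← notMem_supp]
  exact fun hh => hc (h Ξ' (hs.trans hK) hf (hΞ.mono hs) y' hy' n hh)

theorem BB.R1 {K : Subgroup G} (hV : S.Cov x V) (h : S.BB x V K) :
    ∃ T : Set G, T.Finite ∧ T ⊆ K ∧ ∀ M : Subgroup G, T ⊆ M → M ≤ K → S.BB x V M := by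
  obtain ⟨F, hF, h⟩ := h
  refine ⟨((F ∪ V)⁻¹ * S.Q * (F ∪ V)) ∩ K, ?_, Set.inter_subset_right, fun M hT hM => ?_⟩
  · exact (((hF.union hV.1).inv.mul S.Qfin).mul (hF.union hV.1)).subset Set.inter_subset_left
  refine ⟨F ∪ V, hF.union hV.1, fun Ξ hΞ hf hs y hy n => ?_⟩
  induction n with
  | zero =>
    exact hy.supp.trans (Set.mul_subset_mul Set.subset_union_right hΞ)
  | succ n ih =>
    intro g hg
    obtain ⟨c, hc, k, hk, rfl⟩ := h Ξ (hΞ.trans hM) hf hs y hy (n+1) hg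
    rw [Function.iterate_succ_apply'] at hg
    obtain ⟨q, hq, hq'⟩ := S.supp_f hg
    obtain ⟨c', hc', m, hm, he⟩ := ih hq'
    refine ⟨c, Or.inl hc, k, ?_, rfl⟩
    simp only at he
    have e1 : k = (c⁻¹ * q⁻¹ * c') * m := by
      rw [mul_assoc, he]; group
    have e2 : c⁻¹ * q⁻¹ * c' ∈ (M : Set G) := by
      apply hT
      refine ⟨Set.mul_mem_mul (Set.mul_mem_mul (Set.inv_mem_inv.2 (Or.inl hc)) (S.Qinv q hq)) hc', ?_⟩
      have : c⁻¹ * q⁻¹ * c' = k * m⁻¹ := by rw [e1]; group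
      rw [this]
      exact K.mul_mem hk (K.inv_mem (hM hm))
    change k ∈ M
    rw [e1]
    exact M.mul_mem e2 hm

theorem BB.R2 {K K₁ : Subgroup G} (h : S.BB x V K) (hle : K₁ ≤ K) {R : Set G} (hR : R.Finite)
    (hKR : (K : Set G) ⊆ R * K₁) : S.BB x V K₁ := by
  obtain ⟨F, hF, h⟩ := h
  refine ⟨F * R, hF.mul hR, fun Ξ hΞ hf hs y hy n => ?_⟩
  refine (h Ξ (hΞ.trans hle) hf hs y hy n).trans ?_
  rw [mul_assoc]
  exact Set.mul_subset_mul_left hKR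

end NSys

namespace NSys
variable {G X : Type} [Group G] [MetricSpace X] [CompactSpace X] [MulAction G X]

theorem lemT {L : Subgroup G} {s : G} (hsL : ∀ j : ℤ, ∀ l ∈ L, s ^ j * l * s ^ (-j) ∈ L)
    (hinf : ∀ j : ℤ, s ^ j ∈ L → j = 0) {A B : Set G} (hA : A.Finite) (hB : B.Finite) :
    ∃ k : ℤ, 0 ≤ k ∧ ∀ a ∈ A, ∀ b ∈ B, ∀ i j : ℤ, ∀ l ∈ L, ∀ l' ∈ L,
      a * s ^ j * l = b * s ^ i * l' → |j - i| ≤ k := by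
  have hfin : (⋃ a ∈ A, ⋃ b ∈ B, {j : ℤ | ∃ l ∈ L, a * s ^ j * l = b}).Finite := by
    refine hA.biUnion fun a _ => hB.biUnion fun b _ => Set.Subsingleton.finite ?_
    rintro j ⟨l, hl, h⟩ j' ⟨l', hl', h'⟩
    have : s ^ (j - j') = (s ^ (j') * s ^ (-j')) * (s ^ j' * (l' * l⁻¹) * s ^ (-j')) := by
      have h2 : s ^ j * l = s ^ j' * l' := by
        have := h.trans h'.symm
        rw [mul_assoc, mul_assoc] at this
        exact mul_left_cancel this
      have h3 : s ^ j = s ^ j' * l' * l⁻¹ := by rw [← h2]; group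
      rw [sub_eq_add_neg, zpow_add, h3]; group
    have h4 : s ^ (j - j') ∈ L := by
      rw [this]
      refine L.mul_mem ?_ (hsL _ _ (L.mul_mem hl' (L.inv_mem hl)))
      rw [← zpow_add]; simp
    have := hinf _ h4
    omega
  obtain ⟨k, hk⟩ := (hfin.image (fun j : ℤ => |j|)).bddAbove
  refine ⟨max k 0, le_max_right _ _, fun a ha b hb i j l hl l' hl' h => ?_⟩
  refine le_trans (hk ⟨j - i, ?_, rfl⟩) (le_max_left _ _)
  simp only [Set.mem_iUnion]
  refine ⟨a, ha, b, hb, s ^ i * (l * l'⁻¹) * s ^ (-i), hsL _ _ (L.mul_mem hl (L.inv_mem hl')), ?_⟩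
  have : a * s ^ (j - i) * (s ^ i * (l * l'⁻¹) * s ^ (-i)) = (a * s ^ j * l) * l'⁻¹ * s ^ (-i) := by
    rw [sub_eq_add_neg, zpow_add]; group
  rw [this, h]; group

def EE (Ξ : Set G) (s : G) (L : Subgroup G) (J : Set ℤ) : Set G :=
  {g | ∃ ξ ∈ Ξ, ∃ j ∈ J, ∃ l ∈ L, g = ξ * s ^ j * l}

theorem EE_shift {Ξ : Set G} {s : G} {L : Subgroup G}
    (hsL : ∀ j : ℤ, ∀ l ∈ L, s ^ j * l * s ^ (-j) ∈ L) (J : Set ℤ) (p : ℤ) :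
    {g | g * s ^ p ∈ EE Ξ s L J} = EE Ξ s L {j | j + p ∈ J} := by
  ext g
  constructor
  · rintro ⟨ξ, hξ, j, hj, l, hl, h⟩
    refine ⟨ξ, hξ, j - p, by simpa using hj, s ^ p * l * s ^ (-p), hsL _ _ hl, ?_⟩
    have : g = ξ * s ^ j * l * s ^ (-p) := by rw [← h]; group
    rw [this, sub_eq_add_neg, zpow_add]; group
  · rintro ⟨ξ, hξ, j, hj, l, hl, rfl⟩
    refine ⟨ξ, hξ, j + p, hj, s ^ (-p) * l * s ^ (- -p), hsL _ _ hl, ?_⟩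
    rw [zpow_add]; group

theorem EE_fixed {Ξ : Set G} {s : G} {L : Subgroup G} (J : Set ℤ) {l : G} (hl : l ∈ L) (g : G) :
    g * l ∈ EE Ξ s L J ↔ g ∈ EE Ξ s L J := by
  constructor
  · rintro ⟨ξ, hξ, j, hj, l', hl', h⟩
    exact ⟨ξ, hξ, j, hj, l' * l⁻¹, L.mul_mem hl' (L.inv_mem hl), by
      rw [← mul_assoc, ← h]; group⟩
  · rintro ⟨ξ, hξ, j, hj, l', hl', rfl⟩
    exact ⟨ξ, hξ, j, hj, l' * l, L.mul_mem hl' hl, by group⟩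

theorem EE_mono {Ξ : Set G} {s : G} {L : Subgroup G} {J J' : Set ℤ} (h : J ⊆ J') :
    EE Ξ s L J ⊆ EE Ξ s L J' := by
  rintro g ⟨ξ, hξ, j, hj, l, hl, rfl⟩
  exact ⟨ξ, hξ, j, h hj, l, hl, rfl⟩

variable {S : NSys G X} {x : X} {V : Set G}

theorem finC {C : Set G} (hC : C.Finite) (s : G) (a b : ℤ) :
    {g : G | ∃ c ∈ C, ∃ i : ℤ, a ≤ i ∧ i ≤ b ∧ g = c * s ^ i}.Finite := by
  refine (Set.Finite.mul hC ((Set.finite_Icc a b).image (fun i => s ^ i))).subset ?_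
  rintro g ⟨c, hc, i, h1, h2, rfl⟩
  exact Set.mul_mem_mul hc ⟨i, ⟨h1, h2⟩, rfl⟩

open Classical in
/-- truncation -/
theorem ztrunc (hV : S.Cov x V) {Ξ : Set G} (hΞ : Ξ.Finite) {L : Subgroup G} {s : G}
    (hsL : ∀ j : ℤ, ∀ l ∈ L, s ^ j * l * s ^ (-j) ∈ L)
    (hinf : ∀ j : ℤ, s ^ j ∈ L → j = 0)
    (hSep : Sep V (EE Ξ s L Set.univ)) {C : Set G} (hC : C.Finite)
    (hsupp : ∀ J y n, S.IsSum x V (EE Ξ s L J) y → ∀ g ∈ S.supp (S.f^[n] y),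
      ∃ c ∈ C, ∃ j : ℤ, ∃ l ∈ L, g = c * s ^ j * l) :
    ∃ m : ℕ, ∃ k : ℤ, 0 ≤ k ∧ ∀ p : ℤ, k < p → ∃ J : Set ℤ, (0 : ℤ) ∈ J ∧
      (∀ j ∈ J, j = 0 ∨ p - k ≤ |j|) ∧ ∃ w c, S.IsSum x V (EE Ξ s L J) w ∧ S.Mortal c ∧
      (∃ T : Set G, T.Finite ∧ S.supp c ⊆ T * (L : Set G)) ∧
      (∀ g, (dist (g • c) (g • S.f^[m] w) ≤ S.ε) ∨ (dist (g • c) S.x₀ ≤ S.ε ∧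
        ∀ c ∈ C, ∀ j : ℤ, |j| < p → ∀ l ∈ L, g ≠ c * s ^ j * l)) ∧
      (∀ g ∈ S.supp c, ∃ q ∈ S.Q, q * g ∈ S.supp (S.f^[m] w)) := by
  have hSepJ : ∀ J, Sep V (EE Ξ s L J) := fun J => hSep.mono (EE_mono (Set.subset_univ J))
  obtain ⟨R, hR0, hR⟩ := lemT hsL hinf ((S.powfin 4).mul hC) hC
  obtain ⟨z, ⟨J₀, hz⟩, B, hB, m, hm⟩ := S.baire {y | ∃ J, S.IsSum x V (EE Ξ s L J) y}
    (by
      obtain ⟨y, hy⟩ := exists_isSum hV (hSepJ ∅)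
      exact ⟨y, ∅, hy⟩) _ (finC hC s (-R) R)
  obtain ⟨k, hk0, hk⟩ := lemT hsL hinf hΞ (hV.1.inv.mul hB)
  refine ⟨m, k, hk0, fun p hp => ?_⟩
  set J : Set ℤ := {j | j = 0 ∨ (|j - p| ≤ k ∧ j - p ∈ J₀) ∨ (|j + p| ≤ k ∧ j + p ∈ J₀)} with hJ
  obtain ⟨w, hw⟩ := exists_isSum hV (hSepJ J)
  have hwL : ∀ n, ∀ l ∈ L, l • S.f^[n] w = S.f^[n] w := by
    intro n l hl
    rw [← S.iter_eq, hw.fixed (fun g => EE_fixed J hl g)]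
  have hgood : ∀ p' : ℤ, (p' = p ∨ p' = -p) → ∀ n ≥ m, ∀ c ∈ C, ∀ j : ℤ, |j - p'| ≤ R → ∀ l ∈ L,
      c * s ^ j * l ∉ S.supp (S.f^[n] w) := by
    intro p' hp' n hn c hc j hj l hl
    rw [notMem_supp, mul_smul, hwL n l hl]
    have h1 := hw.smul (s ^ p')
    rw [EE_shift hsL] at h1
    have h2 := hm _ ⟨_, h1⟩ (fun g hg => ?_) n hn (c * s ^ (j - p'))
      ⟨c, hc, j - p', (abs_le.1 hj).1, (abs_le.1 hj).2, rfl⟩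
    · rw [S.iter_eq, ← mul_smul, mul_assoc, ← zpow_add] at h2
      simpa using h2
    · have := h1.close hz (g := g) ?_
      · linarith [S.εpos]
      intro v hv
      constructor
      · rintro ⟨ξ, hξ, i, hi, l', hl', he⟩
        have := hk ξ hξ (v⁻¹ * g) (Set.mul_mem_mul (Set.inv_mem_inv.2 hv) hg) 0 i l' hl' 1 L.one_mem
          (by simp [he])
        refine ⟨ξ, hξ, i, ?_, l', hl', he⟩
        rw [sub_zero, abs_le] at this
        simp only [hJ, Set.mem_ofPred_eq, abs_le] at hi
        rcases hp' with rfl | rfl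
        · rcases hi with hi | hi | hi
          · omega
          · simpa using hi.2
          · omega
        · rcases hi with hi | hi | hi
          · omega
          · omega
          · simpa using hi.2
      · rintro ⟨ξ, hξ, i, hi, l', hl', he⟩
        have := hk ξ hξ (v⁻¹ * g) (Set.mul_mem_mul (Set.inv_mem_inv.2 hv) hg) 0 i l' hl' 1 L.one_mem
          (by simp [he])
        refine ⟨ξ, hξ, i, ?_, l', hl', he⟩
        rw [sub_zero] at this
        simp only [hJ, Set.mem_ofPred_eq]
        rcases hp' with rfl | rfl
        · right; left; simpa using ⟨this, hi⟩
        · right; right; simpa using ⟨this, hi⟩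
  set A : Set G := {g | ∃ u ∈ S.Q ^ 2, ∃ c ∈ C, ∃ j : ℤ, |j| < p ∧ ∃ l ∈ L, g = u * (c * s ^ j * l)}
    with hA
  let a : G → Bool := fun g => decide (g ∈ A)
  let P : Bool → X := fun b => if b then S.f^[m] w else S.x₀
  have hclean : ∀ i, S.Clean a (fun b => S.f^[i] (P b)) := by
    intro i g
    by_cases h1 : ∃ q ∈ S.Q, q * g ∈ S.supp (S.f^[i + m] w)
    · left
      obtain ⟨q, hq, hqg⟩ := h1
      obtain ⟨c, hc, j, l, hl, he⟩ := hsupp J w (i + m) hw _ hqg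
      have hgd := fun p' hp' => hgood p' hp' (i + m) (by omega) c hc j
      by_cases hjp : |j| < p
      · have : ∀ q' ∈ S.Q, q' * g ∈ A := fun q' hq' =>
          ⟨q' * q⁻¹, S.powmem (S.mem1 hq') (S.powinv (S.mem1 hq)), c, hc, j, hjp, l, hl, by
            rw [← he]; group⟩
        have h0 : g ∈ A := by simpa using this 1 S.Qone
        intro q' hq'
        simp [a, this q' hq', h0]
      · have : ∀ q' ∈ S.Q, q' * g ∉ A := by
          rintro q' hq' ⟨u, hu, c', hc', j', hj', l', hl', he'⟩
          have hh := hR (u⁻¹ * (q' * q⁻¹) * c) (Set.mul_mem_mul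
            (S.powmem (S.powinv hu) (S.powmem (S.mem1 hq') (S.powinv (S.mem1 hq)))) hc) c' hc' j' j
            l hl l' hl' (by
              have e1 : c * s ^ j * l = q * g := he.symm
              have e2 : c' * s ^ j' * l' = u⁻¹ * (q' * g) := by rw [he']; group
              rw [e2, mul_assoc (u⁻¹ * _), mul_assoc (u⁻¹ * _), e1]; group)
          have n1 : ¬ |j - p| ≤ R := fun h => hgd p (Or.inl rfl) h l hl (he ▸ hqg)
          have n2 : ¬ |j - -p| ≤ R := fun h => hgd (-p) (Or.inr rfl) h l hl (he ▸ hqg)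
          rw [abs_le] at n1 n2 hh
          rw [abs_lt] at hjp hj'
          omega
        have h0 : g ∉ A := by simpa using this 1 S.Qone
        intro q' hq'
        simp [a, this q' hq', h0]
    · right
      push Not at h1
      intro q hq q' hq'
      have e1 := h1 q hq
      rw [notMem_supp] at e1
      cases a (q' * g)
      · simp [P, S.smul_zero, S.iter_zero, S.εpos.le]
      · simpa [P, Function.iterate_add_apply] using e1
  obtain ⟨c, hc⟩ := S.real_exists (by simpa using hclean 0)
  have hci := fun n => S.real_iter n (fun i _ => hclean i) hc
  have hcs : ∀ n, ∀ g ∈ S.supp (S.f^[n] c), ∃ q ∈ S.Q, q * g ∈ A ∧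
      q * g ∈ S.supp (S.f^[n] (S.f^[m] w)) := by
    intro n g hg
    obtain ⟨q, hq, hq'⟩ := S.real_supp (hci n) hg
    refine ⟨q, hq, ?_⟩
    by_cases h : q * g ∈ A
    · simp only [a, P, h, decide_true, if_true] at hq'
      exact ⟨h, hq'⟩
    · simp [a, P, h, S.iter_zero, S.supp_zero] at hq'
  have hAfin : (S.Q * (S.Q ^ 2 * {g : G | ∃ c ∈ C, ∃ i : ℤ, -p ≤ i ∧ i ≤ p ∧ g = c * s ^ i})).Finite :=
    S.Qfin.mul ((S.powfin 2).mul (finC hC s (-p) p))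
  have hcT : ∀ n, S.supp (S.f^[n] c) ⊆
      (S.Q * (S.Q ^ 2 * {g : G | ∃ c ∈ C, ∃ i : ℤ, -p ≤ i ∧ i ≤ p ∧ g = c * s ^ i})) * (L : Set G) := by
    intro n g hg
    obtain ⟨q, hq, ⟨u, hu, c', hc', j, hj, l, hl, he⟩, -⟩ := hcs n g hg
    rw [abs_lt] at hj
    refine ⟨q⁻¹ * (u * (c' * s ^ j)), Set.mul_mem_mul (S.Qinv q hq) (Set.mul_mem_mul hu
      ⟨c', hc', j, by omega, by omega, rfl⟩), l, hl, ?_⟩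
    have : g = q⁻¹ * (u * (c' * s ^ j * l)) := by rw [← he]; group
    simp only [this, mul_assoc]
  have hAL : ∀ l ∈ L, ∀ g, g * l ∈ A ↔ g ∈ A := by
    intro l hl g
    constructor
    · rintro ⟨u, hu, c', hc', j, hj, l', hl', he⟩
      exact ⟨u, hu, c', hc', j, hj, l' * l⁻¹, L.mul_mem hl' (L.inv_mem hl), by
        have : g = u * (c' * s ^ j * l') * l⁻¹ := by rw [← he]; group
        rw [this]; group⟩
    · rintro ⟨u, hu, c', hc', j, hj, l', hl', rfl⟩
      exact ⟨u, hu, c', hc', j, hj, l' * l, L.mul_mem hl' hl, by group⟩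
  have hcL : ∀ l ∈ L, l • c = c := by
    intro l hl
    refine S.real_unique (a := a) (p := P) ?_ hc
    intro g
    have h1 := hc (g * l)
    have h2 : a (g * l) = a g := by simp [a, hAL l hl g]
    have h3 : ∀ b, l • P b = P b := by
      intro b
      cases b
      · simp [P, S.smul_zero]
      · simp [P, hwL m l hl]
    rwa [h2, mul_smul, mul_smul, h3] at h1
  refine ⟨J, Or.inl rfl, ?_, w, c, hw, S.mortal_of_bounded L hcL _ hAfin hcT,
    ⟨_, hAfin, hcT 0⟩, ?_, ?_⟩
  · intro j hj
    simp only [hJ, Set.mem_ofPred_eq] at hj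
    rcases hj with hj | ⟨hj, -⟩ | ⟨hj, -⟩
    · exact Or.inl hj
    · right; rw [le_abs]; rw [abs_le] at hj; omega
    · right; rw [le_abs]; rw [abs_le] at hj; omega
  · intro g
    have h := hc g
    by_cases hg : g ∈ A
    · left; simpa [a, P, hg] using h
    · right
      refine ⟨by simpa [a, P, hg, S.smul_zero] using h, fun c' hc' j hj l hl he => hg ?_⟩
      exact ⟨1, S.one_mem_pow 2, c', hc', j, hj, l, hl, by simpa using he⟩
  · intro g hg
    obtain ⟨q, hq, -, h⟩ := hcs 0 g hg
    exact ⟨q, hq, h⟩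

end NSys

namespace NSys
variable {G X : Type} [Group G] [MetricSpace X] [CompactSpace X] [MulAction G X]
variable {S : NSys G X} {x : X} {V : Set G}

theorem zmortal (hV : S.Cov x V) {Ξ : Set G} (hΞ : Ξ.Finite) {L : Subgroup G} {s : G}
    (hsL : ∀ j : ℤ, ∀ l ∈ L, s ^ j * l * s ^ (-j) ∈ L)
    (hinf : ∀ j : ℤ, s ^ j ∈ L → j = 0)
    (hSep : Sep V (EE Ξ s L Set.univ)) {C : Set G} (hC : C.Finite)
    (hsupp : ∀ J y n, S.IsSum x V (EE Ξ s L J) y → ∀ g ∈ S.supp (S.f^[n] y),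
      ∃ c ∈ C, ∃ j : ℤ, ∃ l ∈ L, g = c * s ^ j * l)
    {y : X} (hy : S.IsSum x V (EE Ξ s L {0}) y) : S.Mortal y := by
  have he := S.εpos
  obtain ⟨m, k, hk0, htr⟩ := ztrunc hV hΞ hsL hinf hSep hC hsupp
  obtain ⟨D, hD, N, hlemA⟩ := S.lemA L C hC
  obtain ⟨k2, hk20, hk2⟩ := lemT hsL hinf (S.Qfin.mul hD) (((S.powfin m).mul hV.1).mul hΞ)
  have hyL : ∀ n, ∀ l ∈ L, l • S.f^[n] y = S.f^[n] y := by
    intro n l hl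
    rw [← S.iter_eq, hy.fixed (fun g => EE_fixed {0} hl g)]
  have key : ∀ j : ℤ, k2 < |j| → ∀ n ≥ N, ∀ c ∈ C,
      dist ((c * s ^ j) • S.f^[n] (S.f^[m] y)) S.x₀ ≤ S.ε := by
    intro j hj n hn c hc
    apply S.lim
    intro B hB
    obtain ⟨k3, hk30, hk3⟩ := lemT hsL hinf hΞ (hV.1.inv.mul ((S.powfin (m+1)).mul hB))
    obtain ⟨k4, hk40, hk4⟩ := lemT hsL hinf hC hB
    obtain ⟨p, hp1, hp2, hp3⟩ : ∃ p : ℤ, k + k3 < p ∧ k4 < p ∧ |j| + k + k2 < p :=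
      ⟨max (k + k3) (max k4 (|j| + k + k2)) + 1, by omega, by omega, by omega⟩
    obtain ⟨J, hJ0, hJ, w, d, hw, hd, ⟨T, hT, hdT⟩, hdist, hds⟩ := htr p (by omega)
    refine ⟨d, fun g hg => ?_, ?_⟩
    · rcases hdist g with h | ⟨h, h'⟩
      · have h2 : dist (g • S.f^[m] w) (g • S.f^[m] y) ≤ S.ε / 2 := by
          apply S.agree_iter'
          intro u hu
          refine le_trans (hw.close hy ?_) (by linarith)
          intro v hv
          have hmem : v⁻¹ * (u * g) ∈ V⁻¹ * (S.Q ^ (m+1) * B) :=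
            Set.mul_mem_mul (Set.inv_mem_inv.2 hv) (Set.mul_mem_mul hu hg)
          constructor
          · rintro ⟨ξ, hξ, i, hi, l, hl, h0⟩
            have h1 := hk3 ξ hξ _ hmem 0 i l hl 1 L.one_mem (by simp [h0])
            rw [sub_zero] at h1
            refine ⟨ξ, hξ, i, ?_, l, hl, h0⟩
            rcases hJ i hi with h2 | h2
            · exact h2
            · omega
          · rintro ⟨ξ, hξ, i, hi, l, hl, h0⟩
            exact ⟨ξ, hξ, i, by rw [Set.mem_singleton_iff.1 hi]; exact hJ0, l, hl, h0⟩
        linarith [dist_triangle (g • d) (g • S.f^[m] w) (g • S.f^[m] y)]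
      · have h2 : dist (g • S.f^[m] y) S.x₀ ≤ S.ε := by
          rw [← notMem_supp]
          intro hh
          obtain ⟨c', hc', i, l, hl, h0⟩ := hsupp _ _ _ hy g hh
          refine h' c' hc' i ?_ l hl h0
          have := hk4 c' hc' g hg 0 i l hl 1 L.one_mem (by simp [h0])
          rw [sub_zero] at this
          omega
        linarith [dist_triangle_right (g • d) (g • S.f^[m] y) S.x₀]
    · rw [mul_smul, ← S.iter_eq]
      refine hlemA _ (S.mortal_smul hd _) ⟨T * {s ^ (-j)}, hT.mul (Set.finite_singleton _), ?_⟩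
        ?_ n hn c hc
      · intro g hg
        rw [mem_supp_smul] at hg
        obtain ⟨t, ht, l, hl, h0⟩ := hdT hg
        refine ⟨t * s ^ (-j), Set.mul_mem_mul ht rfl, s ^ j * l * s ^ (-j), hsL _ _ hl, ?_⟩
        simp only at h0 ⊢
        have : g = t * l * s ^ (-j) := by rw [h0]; group
        rw [this]; group
      · intro d' hd' l hl hmem
        rw [mem_supp_smul] at hmem
        obtain ⟨q, hq, hq'⟩ := hds _ hmem
        obtain ⟨u, hu, ξ', ⟨ξ, hξ, i, hi, l', hl', rfl⟩, h0⟩ := hw.supp_iter m hq'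
        have h1 := hk2 (q * d') (Set.mul_mem_mul hq hd') (u * ξ) (Set.mul_mem_mul hu hξ) i j
          (s ^ (-j) * l * s ^ (- -j)) (hsL _ _ hl) l' hl' (by
            simp only at h0
            have : u * ξ * s ^ i * l' = u * (ξ * s ^ i * l') := by group
            rw [this, h0]; group)
        rcases hJ i hi with h2 | h2
        · rw [h2, sub_zero] at h1; omega
        · have := abs_sub_abs_le_abs_sub i j
          rw [abs_sub_comm] at h1
          omega
  refine S.mortal_of_iter (m := m) (S.mortal_of_iter (m := N) ?_)
  refine S.mortal_of_bounded L (fun l hl => ?_) _ (finC hC s (-k2) k2) ?_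
  · rw [← S.iter_eq, hyL m l hl]
  · intro n g hg
    rw [← Function.iterate_add_apply] at hg
    have hg2 := hg
    rw [← Function.iterate_add_apply] at hg2
    obtain ⟨c, hc, j, l, hl, rfl⟩ := hsupp _ _ _ hy g hg2
    refine ⟨c * s ^ j, ⟨c, hc, j, ?_⟩, l, hl, rfl⟩
    by_contra hcon
    have hj : k2 < |j| := by
      rw [lt_abs]
      by_contra h
      exact hcon ⟨by omega, by omega, rfl⟩
    refine absurd hg ?_
    rw [notMem_supp]
    have := key j hj (n + N) (by omega) c hc
    rw [mul_smul _ l, ← S.iter_eq, hyL m l hl]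
    exact this

end NSys

namespace NSys
variable {G X : Type} [Group G] [MetricSpace X] [CompactSpace X] [MulAction G X]
variable {S : NSys G X} {x : X} {V : Set G}

theorem exists_reps {K₁ K : Subgroup G} (h : K₁.relIndex K ≠ 0) :
    ∃ R : Set G, R.Finite ∧ (K : Set G) ⊆ R * K₁ := by
  have hf : Finite (K ⧸ K₁.subgroupOf K) := by
    apply Nat.finite_of_card_ne_zero
    exact h
  refine ⟨Set.range (fun c : K ⧸ K₁.subgroupOf K => (c.out : G)), Set.finite_range _, ?_⟩
  intro k hk
  refine ⟨_, ⟨((⟨k, hk⟩ : K) : K ⧸ K₁.subgroupOf K), rfl⟩,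
    ((((⟨k, hk⟩ : K) : K ⧸ K₁.subgroupOf K).out : K) : G)⁻¹ * k, ?_, by simp⟩
  have := QuotientGroup.out_eq' (((⟨k, hk⟩ : K) : K ⧸ K₁.subgroupOf K))
  have h2 := QuotientGroup.eq.1 this
  rw [Subgroup.mem_subgroupOf] at h2
  simpa using h2

/-- residual finiteness of `H`, as a statement on subgroups of `G` -/
def RF (H : Subgroup G) : Prop :=
  ∀ A : Set G, A.Finite → ∃ H' : Subgroup G, (∀ h ∈ H, ∀ a ∈ H', h * a * h⁻¹ ∈ H') ∧
    H'.relIndex H ≠ 0 ∧ ∀ a ∈ A, a ∈ H' → a = 1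

theorem R3a {H K K₁ : Subgroup G} (hV : S.Cov x V) (hRF : RF H) (hKH : K ≤ H) (hK₁ : K₁ ≤ K)
    (hN : ∀ k ∈ K, ∀ l ∈ K₁, k * l * k⁻¹ ∈ K₁) {t : G} (ht : t ∈ K)
    (hK : ∀ k ∈ K, ∃ i : ℤ, ∃ l ∈ K₁, k = t ^ i * l)
    (hinf : ∀ i : ℤ, t ^ i ∈ K₁ → i = 0) (hBB : S.BB x V K)
    {Ξ : Set G} (hΞK : Ξ ⊆ K) (hΞ : Ξ.Finite) (hSep : Sep V Ξ) {A : Set G} (hA : A.Finite) :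
    ∃ L : Subgroup G, L ≤ K₁ ∧ (∀ a ∈ A, a ∈ L → a = 1) ∧
      ∃ y, S.IsSum x V {g | ∃ ξ ∈ Ξ, ∃ l ∈ L, g = ξ * l} y ∧ S.Mortal y := by
  obtain ⟨F, hF, hBB⟩ := hBB.all hV
  obtain ⟨H', hH', hidx, hav⟩ := hRF (A ∪ (V * Ξ)⁻¹ * (V * Ξ))
    (hA.union ((hV.1.mul hΞ).inv.mul (hV.1.mul hΞ)))
  obtain ⟨g, hg0, hgt⟩ : ∃ g : ℕ, 0 < g ∧ t ^ g ∈ H' := by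
    obtain ⟨g, h1, h2, h3⟩ := Subgroup.exists_pow_mem_of_relIndex_ne_zero hidx (hKH ht)
    exact ⟨g, h1, h3.1⟩
  set s := t ^ g with hs
  have hsK : s ∈ K := K.pow_mem ht g
  set L := K₁ ⊓ H' with hL
  have hsL : ∀ k ∈ K, ∀ l ∈ L, k * l * k⁻¹ ∈ L := fun k hk l hl =>
    ⟨hN k hk l hl.1, hH' k (hKH hk) l hl.2⟩
  have hsL' : ∀ j : ℤ, ∀ l ∈ L, s ^ j * l * s ^ (-j) ∈ L := fun j l hl => by
    rw [zpow_neg]; exact hsL _ (K.zpow_mem hsK j) l hl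
  have hinf' : ∀ j : ℤ, s ^ j ∈ L → j = 0 := by
    intro j hj
    have : t ^ ((g : ℤ) * j) ∈ K₁ := by
      rw [zpow_mul, zpow_natCast]; exact hj.1
    have := hinf _ this
    rcases mul_eq_zero.1 this with h | h
    · omega
    · exact h
  have hsl : ∀ j : ℤ, ∀ l ∈ L, s ^ j * l ∈ H' := fun j l hl =>
    H'.mul_mem (H'.zpow_mem hgt j) hl.2
  have hSepE : Sep V (EE Ξ s L Set.univ) := by
    rintro _ ⟨ξ, hξ, j, -, l, hl, rfl⟩ _ ⟨ξ', hξ', j', -, l', hl', rfl⟩ v hv v' hv' he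
    have e1 : (v' * ξ')⁻¹ * (v * ξ) = (s ^ j' * l') * (s ^ j * l)⁻¹ := by
      have : v * ξ = v' * (ξ' * s ^ j' * l') * (s ^ j * l)⁻¹ := by rw [← he]; group
      rw [this]; group
    have e2 := hav _ (Or.inr (Set.mul_mem_mul (Set.inv_mem_inv.2 (Set.mul_mem_mul hv' hξ'))
      (Set.mul_mem_mul hv hξ))) (by
        rw [e1]; exact H'.mul_mem (hsl j' l' hl') (H'.inv_mem (hsl j l hl)))
    have e3 : ξ = ξ' := hSep ξ hξ ξ' hξ' v hv v' hv' (inv_mul_eq_one.1 e2).symm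
    rw [e1, mul_inv_eq_one] at e2
    rw [mul_assoc, mul_assoc, e2, e3]
  obtain ⟨R, hR, hKR⟩ := exists_reps (K₁ := L) (K := K₁) (by
    rw [hL, Subgroup.inf_relIndex_left]
    exact mt (Subgroup.relIndex_eq_zero_of_le_right (hK₁.trans hKH)) hidx)
  have hsupp : ∀ J y n, S.IsSum x V (EE Ξ s L J) y → ∀ h ∈ S.supp (S.f^[n] y),
      ∃ c ∈ F * (R * ((fun r : ℕ => t ^ r) '' Set.Iio g)), ∃ j : ℤ, ∃ l ∈ L,
        h = c * s ^ j * l := by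
    intro J y n hy h hh
    obtain ⟨c, hc, k, hk, rfl⟩ := hBB _ (by
      rintro _ ⟨ξ, hξ, j, -, l, hl, rfl⟩
      exact K.mul_mem (K.mul_mem (hΞK hξ) (K.zpow_mem hsK j)) (hK₁ hl.1))
      (hSepE.mono (EE_mono (Set.subset_univ J))) y hy n hh
    obtain ⟨i, k₁, hk₁, rfl⟩ := hK k hk
    obtain ⟨r, hr, l, hl, he⟩ := hKR (hN _ (K.zpow_mem ht i) k₁ hk₁)
    simp only at he
    have hi : i = ((i % g).toNat : ℤ) + g * (i / g) := by
      rw [Int.toNat_of_nonneg (Int.emod_nonneg _ (by omega))]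
      exact (Int.emod_add_mul_ediv i g).symm
    have hti : t ^ i = t ^ ((i % g).toNat) * s ^ (i / g) := by
      conv_lhs => rw [hi]
      rw [zpow_add, zpow_mul, zpow_natCast, zpow_natCast]
    refine ⟨c * (r * t ^ ((i % g).toNat)), Set.mul_mem_mul hc (Set.mul_mem_mul hr
      ⟨_, ?_, rfl⟩), i / g, (t ^ i)⁻¹ * l * (t ^ i)⁻¹⁻¹, hsL _ (K.inv_mem (K.zpow_mem ht i)) l hl, ?_⟩
    · have := Int.emod_lt_of_pos i (b := g) (by omega)
      have := Int.emod_nonneg i (b := g) (by omega)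
      simp only [Set.mem_Iio]
      omega
    · have : t ^ i * k₁ = r * l * t ^ i := by rw [he]; group
      simp only [this]
      have h2 : c * (r * t ^ (i % ↑g).toNat) * s ^ (i / ↑g) = c * (r * t ^ i) := by
        rw [hti]; group
      rw [h2]; group
  have hEE : EE Ξ s L {0} = {g | ∃ ξ ∈ Ξ, ∃ l ∈ L, g = ξ * l} := by
    ext h
    simp [EE]
  obtain ⟨y, hy⟩ := exists_isSum hV (hSepE.mono (EE_mono (Set.subset_univ {0})))
  refine ⟨L, inf_le_left, fun a ha haL => hav a (Or.inl ha) haL.2, y, hEE ▸ hy, ?_⟩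
  exact zmortal hV hΞ hsL' hinf' hSepE
    (hF.mul (hR.mul ((Set.finite_Iio g).image _))) hsupp hy

theorem BB.R3 {H K K₁ : Subgroup G} (hV : S.Cov x V) (hRF : RF H) (hKH : K ≤ H) (hK₁ : K₁ ≤ K)
    (hN : ∀ k ∈ K, ∀ l ∈ K₁, k * l * k⁻¹ ∈ K₁) {t : G} (ht : t ∈ K)
    (hK : ∀ k ∈ K, ∃ i : ℤ, ∃ l ∈ K₁, k = t ^ i * l)
    (hinf : ∀ i : ℤ, t ^ i ∈ K₁ → i = 0) (hBB : S.BB x V K) : S.BB x V K₁ := by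
  have hBB' := hBB
  obtain ⟨F, hF, hBB⟩ := hBB
  obtain ⟨D, hD, N, hlemA⟩ := S.lemA K₁ F hF
  have claim : ∀ Ξ : Set G, Ξ ⊆ K → Ξ.Finite → Sep V Ξ → 
      (∀ v ∈ V, ∀ ξ ∈ Ξ, ∀ d ∈ D, ∀ k ∈ K₁, v * ξ ≠ d * k) → ∀ y, S.IsSum x V Ξ y →
      ∀ n ≥ N, ∀ c ∈ F, dist (c • S.f^[n] y) S.x₀ ≤ S.ε := by
    intro Ξ hΞK hΞ hSep hmiss y hy n hn c hc
    apply S.lim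
    intro B hB
    obtain ⟨L, hL, hLA, y', hy', hmort⟩ := R3a hV hRF hKH hK₁ hN ht hK hinf hBB' hΞK hΞ hSep
      (A := Ξ⁻¹ * (V⁻¹ * B)) (hΞ.inv.mul (hV.1.inv.mul hB))
    refine ⟨y', fun g hg => ?_, ?_⟩
    · refine le_trans (hy'.close hy ?_) (by linarith [S.εpos])
      intro v hv
      constructor
      · rintro ⟨ξ, hξ, l, hl, he⟩
        have h1 : l = ξ⁻¹ * (v⁻¹ * g) := by rw [he]; group
        have h2 := hLA (ξ⁻¹ * (v⁻¹ * g)) (Set.mul_mem_mul (Set.inv_mem_inv.2 hξ)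
          (Set.mul_mem_mul (Set.inv_mem_inv.2 hv) hg)) (h1 ▸ hl)
        rw [he, h1, h2, mul_one]; exact hξ
      · intro h
        exact ⟨_, h, 1, L.one_mem, by simp⟩
    · refine hlemA y' hmort ⟨V * Ξ, hV.1.mul hΞ, ?_⟩ ?_ n hn c hc
      · intro g hg
        obtain ⟨v, hv, _, ⟨ξ, hξ, l, hl, rfl⟩, rfl⟩ := hy'.supp hg
        exact ⟨v * ξ, Set.mul_mem_mul hv hξ, l, hL hl, by simp [mul_assoc]⟩
      · intro d hd k hk hg
        obtain ⟨v, hv, _, ⟨ξ, hξ, l, hl, rfl⟩, he⟩ := hy'.supp hg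
        refine hmiss v hv ξ hξ d hd (k * l⁻¹) (K₁.mul_mem hk (K₁.inv_mem (hL hl))) ?_
        simp only at he
        rw [← mul_assoc, ← he]; group
  refine ⟨F * (D⁻¹ * V) ∪ S.Q ^ N * V, (hF.mul (hD.inv.mul hV.1)).union ((S.powfin N).mul hV.1), ?_⟩
  intro Ξ hΞ hf hs y hy n g hg
  by_cases hn : n < N
  · have := hy.supp_iter n hg
    refine Set.mul_subset_mul ?_ hΞ this
    exact (Set.mul_subset_mul_right (S.powmono hn.le)).trans Set.subset_union_right
  · obtain ⟨c, hc, k, hk, rfl⟩ := hBB Ξ (hΞ.trans hK₁) hf hs y hy n hg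
    have h1 := mt (fun h => claim {g | g * k ∈ Ξ} ?_ ?_ (hs.smul k) h (k • y) (hy.smul k)
      n (by omega) c hc) (by
        rw [S.iter_eq, ← mul_smul]
        exact not_le.2 hg)
    · push Not at h1
      obtain ⟨v, hv, ξ', hξ', d, hd, k₁, hk₁, he⟩ := h1
      set e := d⁻¹ * v with hedef
      have e1 : e = k₁ * k * (ξ' * k)⁻¹ := by
        have : e = d⁻¹ * (v * ξ') * ξ'⁻¹ := by rw [hedef]; group
        rw [this, he]; group
      have heK : e ∈ K := by
        rw [e1]
        exact K.mul_mem (K.mul_mem (hK₁ hk₁) hk) (K.inv_mem (hK₁ (hΞ hξ')))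
      refine ⟨c * e, Or.inl (Set.mul_mem_mul hc (Set.mul_mem_mul (Set.inv_mem_inv.2 hd) hv)),
        e⁻¹ * k₁⁻¹ * e⁻¹⁻¹ * (ξ' * k), K₁.mul_mem (hN _ (K.inv_mem heK) _ (K₁.inv_mem hk₁)) (hΞ hξ'), ?_⟩
      have : k = k₁⁻¹ * e * (ξ' * k) := by rw [e1]; group
      simp only
      conv_rhs => rw [this]
      group
    · intro ξ hξ
      have := K.mul_mem (hK₁ (hΞ hξ)) (K.inv_mem hk)
      simpa using this
    · exact hf.preimage (mul_left_injective k).injOn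

end NSys

namespace NGrp
variable {Γ : Type} [Group Γ]

structure Desc (Φ : Subgroup Γ → Prop) : Prop where
  r1 : ∀ K, Φ K → ∃ T : Set Γ, T.Finite ∧ T ⊆ K ∧ ∀ M : Subgroup Γ, T ⊆ M → M ≤ K → Φ M
  r2 : ∀ K K₁, Φ K → K₁ ≤ K → (∃ R : Set Γ, R.Finite ∧ (K : Set Γ) ⊆ R * K₁) → Φ K₁
  r3 : ∀ K K₁ : Subgroup Γ, Φ K → K₁ ≤ K → (∀ k ∈ K, ∀ l ∈ K₁, k * l * k⁻¹ ∈ K₁) → ∀ t ∈ K,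
    (∀ k ∈ K, ∃ i : ℤ, ∃ l ∈ K₁, k = t ^ i * l) → (∀ i : ℤ, t ^ i ∈ K₁ → i = 0) → Φ K₁

variable {Φ : Subgroup Γ → Prop}

theorem Desc.cyc (h : Desc Φ) {K K₁ : Subgroup Γ} (hK : Φ K) (hle : K₁ ≤ K)
    (hN : ∀ k ∈ K, ∀ l ∈ K₁, k * l * k⁻¹ ∈ K₁) {t : Γ} (ht : t ∈ K)
    (hKt : ∀ k ∈ K, ∃ i : ℤ, ∃ l ∈ K₁, k = t ^ i * l) : Φ K₁ := by
  by_cases hinf : ∀ i : ℤ, t ^ i ∈ K₁ → i = 0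
  · exact h.r3 K K₁ hK hle hN t ht hKt hinf
  · push Not at hinf
    obtain ⟨i, hi, hi0⟩ := hinf
    have hg : t ^ |i| ∈ K₁ := by
      rcases abs_choice i with h' | h' <;> rw [h']
      · exact hi
      · rw [zpow_neg]; exact K₁.inv_mem hi
    have hpos : 0 < |i| := abs_pos.2 hi0
    refine h.r2 K K₁ hK hle ⟨(fun r : ℤ => t ^ r) '' Set.Ico 0 |i|, (Set.finite_Ico _ _).image _, ?_⟩
    intro k hk
    obtain ⟨j, l, hl, rfl⟩ := hKt k hk
    refine ⟨t ^ (j % |i|), ⟨_, ⟨Int.emod_nonneg _ hpos.ne', Int.emod_lt_of_pos _ hpos⟩, rfl⟩,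
      (t ^ |i|) ^ (j / |i|) * l, K₁.mul_mem (K₁.zpow_mem hg _) hl, ?_⟩
    simp only
    rw [← mul_assoc, ← zpow_mul, ← zpow_add, Int.emod_add_mul_ediv]

/-- the subgroup generated by `K₁` and an element normalizing it -/
def ext1 (K₁ : Subgroup Γ) (t : Γ) (hN : ∀ j : ℤ, ∀ l ∈ K₁, t ^ j * l * t ^ (-j) ∈ K₁) :
    Subgroup Γ where
  carrier := {g | ∃ i : ℤ, ∃ l ∈ K₁, g = t ^ i * l}
  one_mem' := ⟨0, 1, K₁.one_mem, by simp⟩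
  mul_mem' := by
    rintro _ _ ⟨i, l, hl, rfl⟩ ⟨j, l', hl', rfl⟩
    refine ⟨i + j, t ^ (-j) * l * t ^ (- -j) * l', K₁.mul_mem (hN _ _ hl) hl', ?_⟩
    rw [zpow_add]; group
  inv_mem' := by
    rintro _ ⟨i, l, hl, rfl⟩
    refine ⟨-i, t ^ i * l⁻¹ * t ^ (-i), hN _ _ (K₁.inv_mem hl), ?_⟩
    group

open Classical in
theorem Desc.abel (h : Desc Φ) (K : Subgroup Γ) (hK : Φ K) (ts : Finset Γ) :
    ∀ K₁ : Subgroup Γ, K₁ ≤ K → (∀ a ∈ K, ∀ b ∈ K, a * b * a⁻¹ * b⁻¹ ∈ K₁) → (∀ t ∈ ts, t ∈ K) →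
    K ≤ K₁ ⊔ Subgroup.closure (ts : Set Γ) → Φ K₁ := by
  induction ts using Finset.induction_on with
  | empty =>
    intro K₁ hle _ _ hgen
    have : K₁ = K := le_antisymm hle (by simpa using hgen)
    rwa [this]
  | insert t ts _ ih =>
    intro K₁ hle hcomm hts hgen
    have ht : t ∈ K := hts t (by simp)
    have hN : ∀ k ∈ K, ∀ l ∈ K₁, k * l * k⁻¹ ∈ K₁ := by
      intro k hk l hl
      have := K₁.mul_mem (hcomm k hk l (hle hl)) hl
      simpa using this
    have hN' : ∀ j : ℤ, ∀ l ∈ K₁, t ^ j * l * t ^ (-j) ∈ K₁ := fun j l hl => by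
      rw [zpow_neg]; exact hN _ (K.zpow_mem ht j) l hl
    set K₂ := ext1 K₁ t hN' with hK₂
    have h1 : K₁ ≤ K₂ := fun l hl => ⟨0, l, hl, by simp⟩
    have h2 : K₂ ≤ K := by
      rintro _ ⟨i, l, hl, rfl⟩
      exact K.mul_mem (K.zpow_mem ht i) (hle hl)
    have ht2 : t ∈ K₂ := ⟨1, 1, K₁.one_mem, by simp⟩
    have hΦ2 : Φ K₂ := by
      apply ih K₂ h2 (fun a ha b hb => h1 (hcomm a ha b hb)) (fun s hs => hts s (by simp [hs]))
      refine hgen.trans (sup_le (h1.trans le_sup_left) ?_)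
      rw [Subgroup.closure_le]
      intro s hs
      rw [Finset.coe_insert, Set.mem_insert_iff] at hs
      rcases hs with rfl | hs
      · exact le_sup_left (a := K₂) ht2
      · exact le_sup_right (a := K₂) (Subgroup.subset_closure hs)
    exact h.cyc hΦ2 h1 (fun k hk => hN k (h2 hk)) ht2 (fun k hk => hk)

open Classical in
theorem Desc.lva (h : Desc Φ) {K K₁ : Subgroup Γ} (hK : Φ K) (hle : K₁ ≤ K)
    (hn : (K₁.subgroupOf K).Normal) (hl : LocallyVirtuallyAbelian (↥K ⧸ K₁.subgroupOf K)) :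
    Φ K₁ := by
  obtain ⟨T, hT, hTK, hM⟩ := h.r1 K hK
  set q := QuotientGroup.mk' (K₁.subgroupOf K) with hq
  have hqs : Function.Surjective q := QuotientGroup.mk'_surjective _
  have hker : ∀ k : K, q k = 1 ↔ (k : Γ) ∈ K₁ := by
    intro k
    rw [hq, QuotientGroup.mk'_apply, QuotientGroup.eq_one_iff, Subgroup.mem_subgroupOf]
  have hT' : (q '' ((↑) ⁻¹' T : Set K)).Finite :=
    (hT.preimage Subtype.val_injective.injOn).image _
  set N := Subgroup.closure (q '' ((↑) ⁻¹' T : Set K)) with hNdef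
  have hNfg : N.FG := (Subgroup.fg_iff N).2 ⟨_, rfl, hT'⟩
  obtain ⟨A, hAfi, hAc⟩ := hl N hNfg
  have : Group.FG N := (Group.fg_iff_subgroup_fg N).2 hNfg
  have : Group.FG A := A.fg_of_index_ne_zero
  have hAfg : A.FG := (Group.fg_iff_subgroup_fg A).1 this
  obtain ⟨as, has⟩ := hAfg
  set B : Subgroup (↥K ⧸ K₁.subgroupOf K) := A.map N.subtype with hB
  have hΦM : Φ ((N.comap q).map K.subtype) := by
    apply hM
    · intro t ht
      exact ⟨⟨t, hTK ht⟩, Subgroup.subset_closure ⟨⟨t, hTK ht⟩, ht, rfl⟩, rfl⟩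
    · exact Subgroup.map_subtype_le _
  have hBN : B ≤ N := Subgroup.map_subtype_le _
  set M' := (B.comap q).map K.subtype with hM'
  have hΦM' : Φ M' := by
    refine h.r2 _ _ hΦM (Subgroup.map_mono (Subgroup.comap_mono hBN)) ?_
    have hfin : Finite (N ⧸ A) := inferInstance
    choose lift hlift using hqs
    refine ⟨Set.range (fun c : N ⧸ A => ((lift (c.out : N) : K) : Γ)), Set.finite_range _, ?_⟩
    rintro _ ⟨k, hk, rfl⟩
    set n : N := ⟨q k, hk⟩ with hnn
    refine ⟨_, ⟨(n : N ⧸ A), rfl⟩, ((lift ((n : N ⧸ A).out : N) : K) : Γ)⁻¹ * k, ?_, by simp⟩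
    refine ⟨(lift ((n : N ⧸ A).out : N))⁻¹ * k, ?_, by simp⟩
    change q _ ∈ B
    rw [map_mul, map_inv, hlift]
    have := QuotientGroup.eq.1 (QuotientGroup.out_eq' (n : N ⧸ A))
    exact ⟨_, this, by simp [hnn]⟩
  have hB1 : ∀ a ∈ B, ∀ b ∈ B, a * b = b * a := by
    rintro _ ⟨a, ha, rfl⟩ _ ⟨b, hb, rfl⟩
    have := hAc ⟨a, ha⟩ ⟨b, hb⟩
    have h2 := congrArg (fun z : A => ((z : N) : ↥K ⧸ K₁.subgroupOf K)) this
    simpa using h2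
  choose lift hlift using hqs
  refine h.abel M' hΦM' (as.image (fun a : N => ((lift a : K) : Γ))) K₁ ?_ ?_ ?_ ?_
  · intro k hk
    refine ⟨⟨k, hle hk⟩, ?_, rfl⟩
    change q _ ∈ B
    rw [(hker ⟨k, hle hk⟩).2 hk]
    exact B.one_mem
  · rintro _ ⟨a, ha, rfl⟩ _ ⟨b, hb, rfl⟩
    have : (K.subtype a * K.subtype b * (K.subtype a)⁻¹ * (K.subtype b)⁻¹) =
      ((a * b * a⁻¹ * b⁻¹ : K) : Γ) := by simp
    rw [this, ← hker]
    simp only [map_mul, map_inv]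
    rw [hB1 _ ha _ hb]; group
  · intro t ht
    rw [Finset.mem_image] at ht
    obtain ⟨a, ha, rfl⟩ := ht
    refine ⟨lift a, ?_, rfl⟩
    change q _ ∈ B
    rw [hlift]
    exact ⟨a, has ▸ Subgroup.subset_closure ha, rfl⟩
  · rintro _ ⟨k, hk, rfl⟩
    have hBcl : B ≤ (Subgroup.closure (lift '' ((fun a : N => (a : ↥K ⧸ K₁.subgroupOf K)) '' as))).map q := by
      rw [hB, ← has, MonoidHom.map_closure, Subgroup.closure_le]
      rintro _ ⟨a, ha, rfl⟩
      exact ⟨lift a, Subgroup.subset_closure ⟨_, ⟨a, ha, rfl⟩, rfl⟩, hlift _⟩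
    obtain ⟨k', hk', he⟩ := hBcl hk
    have h1 : (k' : Γ) ∈ Subgroup.closure
        ((as.image (fun a : N => ((lift a : K) : Γ)) : Finset Γ) : Set Γ) := by
      have h2 := Subgroup.mem_map_of_mem K.subtype hk'
      rw [MonoidHom.map_closure] at h2
      refine Subgroup.closure_mono ?_ h2
      rintro _ ⟨_, ⟨_, ⟨a, ha, rfl⟩, rfl⟩, rfl⟩
      simp only [Finset.coe_image]
      exact ⟨a, ha, rfl⟩
    have h3 : ((k * k'⁻¹ : K) : Γ) ∈ K₁ := by
      rw [← hker, map_mul, map_inv, he, mul_inv_cancel]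
    have h4 : K.subtype k = ((k * k'⁻¹ : K) : Γ) * k' := by simp
    rw [h4]
    exact mul_mem (le_sup_left (a := K₁) h3) (le_sup_right (a := K₁) h1)

theorem Desc.series (h : Desc Φ) (hs : HasLVASubnormalSeries Γ) (htop : Φ ⊤) : Φ ⊥ := by
  obtain ⟨n, c, h0, h1, hc⟩ := hs
  have : ∀ i, Φ (c i) := by
    intro i
    induction i using Fin.reverseInduction with
    | last => rwa [h1]
    | cast i ih =>
      obtain ⟨hle, hn, hl⟩ := hc i
      exact h.lva ih hle hn hl
  rw [← h0]; exact this 0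

theorem rf_finite (hrf : ResiduallyFinite Γ) {A : Set Γ} (hA : A.Finite) :
    ∃ N : Subgroup Γ, N.Normal ∧ N.FiniteIndex ∧ ∀ a ∈ A, a ∈ N → a = 1 := by
  induction A, hA using Set.Finite.induction_on with
  | empty => exact ⟨⊤, inferInstance, inferInstance, by simp⟩
  | @insert b A _ _ ih =>
    obtain ⟨N, h1, h2, h3⟩ := ih
    by_cases hb : b = 1
    · refine ⟨N, h1, h2, ?_⟩
      rintro a (rfl | ha) haN
      · exact hb
      · exact h3 a ha haN
    · obtain ⟨Q, _, φ, hQ, hφ⟩ := hrf b hb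
      refine ⟨N ⊓ φ.ker, inferInstance, inferInstance, ?_⟩
      rintro a (rfl | ha) haN
      · exact absurd haN.2 hφ
      · exact h3 a ha haN.1

end NGrp

namespace NSys
variable {G X : Type} [Group G] [MetricSpace X] [CompactSpace X] [MulAction G X]

theorem rf_of {H : Subgroup G} (h : ResiduallyFinite H) : RF H := by
  intro A hA
  obtain ⟨N, hN, hfi, hav⟩ := NGrp.rf_finite h
    (hA.preimage (f := ((↑) : H → G)) Subtype.val_injective.injOn)
  refine ⟨N.map H.subtype, ?_, ?_, ?_⟩
  · rintro h hh _ ⟨a, ha, rfl⟩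
    exact ⟨⟨h, hh⟩ * a * ⟨h, hh⟩⁻¹, hN.conj_mem a ha _, by simp⟩
  · have : (N.map H.subtype).subgroupOf H = N :=
      Subgroup.comap_map_eq_self_of_injective H.subtype_injective N
    rw [Subgroup.relIndex, this]
    exact hfi.index_ne_zero
  · rintro _ ha ⟨a, haN, rfl⟩
    simp [hav a ha haN]

variable {S : NSys G X} {x : X} {V : Set G}

theorem desc (hV : S.Cov x V) {H : Subgroup G} (hRF : RF H) :
    NGrp.Desc (fun K : Subgroup H => S.BB x V (K.map H.subtype)) where
  r1 := by
    intro K hK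
    obtain ⟨T, hT, hTK, h⟩ := hK.R1 hV
    refine ⟨(↑) ⁻¹' T, hT.preimage Subtype.val_injective.injOn, ?_, fun M hTM hMK => ?_⟩
    · intro t ht
      obtain ⟨k, hk, he⟩ := hTK ht
      have : t = k := Subtype.ext he.symm
      rw [this]; exact hk
    · refine h _ ?_ (Subgroup.map_mono hMK)
      intro t ht
      obtain ⟨k, hk, he⟩ := hTK ht
      refine ⟨k, hTM ?_, he⟩
      change (k : G) ∈ T
      have : (k : G) = t := he
      rw [this]; exact ht
  r2 := by
    rintro K K₁ hK hle ⟨R, hR, hKR⟩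
    refine hK.R2 (Subgroup.map_mono hle) (R := H.subtype '' R) (hR.image _) ?_
    rintro _ ⟨k, hk, rfl⟩
    obtain ⟨r, hr, l, hl, rfl⟩ := hKR hk
    exact ⟨r, ⟨r, hr, rfl⟩, l, ⟨l, hl, rfl⟩, by simp⟩
  r3 := by
    intro K K₁ hK hle hN t ht hKt hinf
    refine BB.R3 hV hRF (Subgroup.map_subtype_le K) (Subgroup.map_mono hle) ?_ (t := t)
      ⟨t, ht, rfl⟩ ?_ ?_ hK
    · rintro _ ⟨k, hk, rfl⟩ _ ⟨l, hl, rfl⟩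
      exact ⟨k * l * k⁻¹, hN k hk l hl, by simp⟩
    · rintro _ ⟨k, hk, rfl⟩
      obtain ⟨i, l, hl, rfl⟩ := hKt k hk
      exact ⟨i, l, ⟨l, hl, rfl⟩, by simp⟩
    · rintro i ⟨k, hk, he⟩
      apply hinf
      have : k = t ^ i := Subtype.ext (by simpa using he)
      rwa [← this]

theorem homoclinic_mortal
    (hgroup : ∀ H : Subgroup G, H.FG → ResiduallyFinite H ∧ HasLVASubnormalSeries H)
    (hx : Homoclinic G S.x₀ x) : S.Mortal x ∧ (S.supp x).Finite := by
  obtain ⟨E, hE⟩ := hx S.ε S.εpos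
  have hfin : (S.supp x).Finite := by
    refine E.finite_toSet.subset fun g hg => ?_
    by_contra hc
    have h1 := hE g hc
    have h2 : S.ε < dist (g • x) S.x₀ := hg
    linarith
  refine ⟨?_, hfin⟩
  set V := S.Q ^ 2 * S.supp x with hVdef
  have hV : S.Cov x V := ⟨(S.powfin 2).mul hfin, fun u hu g hg => Set.mul_mem_mul hu hg⟩
  set H := Subgroup.closure (S.Q ∪ S.supp x) with hH
  have hQH : S.Q ⊆ H := Set.subset_union_left.trans Subgroup.subset_closure
  have hQn : ∀ n, S.Q ^ n ⊆ H := by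
    intro n
    induction n with
    | zero => simp
    | succ n ih =>
      rw [pow_succ]
      rintro _ ⟨a, ha, b, hb, rfl⟩
      exact H.mul_mem (ih ha) (hQH hb)
  have hVH : V ⊆ H := by
    rintro _ ⟨a, ha, b, hb, rfl⟩
    exact H.mul_mem (hQn 2 ha) (Subgroup.subset_closure (Or.inr hb))
  obtain ⟨hrf, hser⟩ := hgroup H ((Subgroup.fg_iff H).2 ⟨_, rfl, S.Qfin.union hfin⟩)
  have htop : S.BB x V ((⊤ : Subgroup H).map H.subtype) := by
    have : (⊤ : Subgroup H).map H.subtype = H := by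
      rw [← MonoidHom.range_eq_map, Subgroup.range_subtype]
    rw [this]
    refine ⟨{1}, Set.finite_singleton _, fun Ξ hΞ _ _ y hy n g hg => ?_⟩
    obtain ⟨_, ⟨u, hu, v, hv, rfl⟩, ξ, hξ, rfl⟩ := hy.supp_iter n hg
    exact ⟨1, rfl, u * v * ξ, H.mul_mem (H.mul_mem (hQn n hu) (hVH hv)) (hΞ hξ), by simp⟩
  have hbot := (desc hV (rf_of hrf)).series hser htop
  simp only [Subgroup.map_bot] at hbot
  obtain ⟨F, hF, h⟩ := hbot
  refine S.mortal_of_bounded ⊥ (by simp) F hF (h {1} (by simp) (Set.finite_singleton _) ?_ x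
    (isSum_self hV))
  intro a ha b hb _ _ _ _ _
  rw [Set.mem_singleton_iff.1 ha, Set.mem_singleton_iff.1 hb]

variable (S) in
theorem nilpotent
    (hgroup : ∀ H : Subgroup G, H.FG → ResiduallyFinite H ∧ HasLVASubnormalSeries H)
    (hhomo : Dense {x : X | Homoclinic G S.x₀ x}) : ∃ n : ℕ, ∀ x : X, S.f^[n] x = S.x₀ := by
  have hε := S.εpos
  obtain ⟨D, hD, N, hA⟩ := S.lemA ⊥ {1} (Set.finite_singleton _)
  have hgood : ∀ z : X, (∀ g ∈ S.Q * D, dist (g • z) S.x₀ ≤ S.ε) → ∀ n ≥ N,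
      dist (S.f^[n] z) S.x₀ ≤ S.ε := by
    intro z hz n hn
    have := S.lim (y := z) (c := 1) (n := n) (fun B hB => ?_)
    · simpa using this
    have hBf : (B ∪ S.Q * D).Finite := hB.union (S.Qfin.mul hD)
    have hopen : IsOpen {y : X | ∀ g ∈ B ∪ S.Q * D, dist (g • y) (g • z) < S.ε} := by
      have : {y : X | ∀ g ∈ B ∪ S.Q * D, dist (g • y) (g • z) < S.ε} =
          ⋂ g ∈ B ∪ S.Q * D, {y : X | dist (g • y) (g • z) < S.ε} := by
        ext y; simp
      rw [this]
      exact hBf.isOpen_biInter fun g _ =>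
        isOpen_lt ((S.cont_smul g).dist continuous_const) continuous_const
    obtain ⟨y, hy, hyh⟩ := hhomo.inter_open_nonempty _ hopen ⟨z, fun g _ => by simpa using hε⟩
    obtain ⟨hm, hfin⟩ := homoclinic_mortal hgroup hyh
    refine ⟨y, fun g hg => by linarith [hy g (Or.inl hg)], ?_⟩
    refine hA y hm ⟨S.supp y, hfin, by simp⟩ ?_ n hn 1 rfl
    intro d hd k hk
    rw [Subgroup.mem_bot.1 hk, mul_one, notMem_supp]
    have := (S.hQ (d • y) S.x₀ (fun q hq => ?_)).1
    · linarith
    · rw [← mul_smul, S.smul_zero]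
      have h1 := hy (q * d) (Or.inr (Set.mul_mem_mul hq hd))
      have h2 := hz (q * d) (Set.mul_mem_mul hq hd)
      linarith [dist_triangle ((q * d) • y) ((q * d) • z) S.x₀]
  have hQD : (S.Q * D).Finite := S.Qfin.mul hD
  let U : ℕ → Set X := fun m => {x | ∀ g ∈ S.Q * D, dist (g • S.f^[m] x) S.x₀ < S.ε}
  have hU : ∀ m, IsOpen (U m) := by
    intro m
    have : U m = ⋂ g ∈ S.Q * D, {x : X | dist (g • S.f^[m] x) S.x₀ < S.ε} := by
      ext y; simp [U]
    rw [this]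
    exact hQD.isOpen_biInter fun g _ =>
      isOpen_lt (((S.cont_smul g).comp (S.contf.iterate m)).dist continuous_const) continuous_const
  have hcov : (Set.univ : Set X) ⊆ ⋃ m, U m := by
    intro x _
    have : ∀ᶠ n in atTop, ∀ g ∈ S.Q * D, dist (g • S.f^[n] x) S.x₀ < S.ε := by
      rw [hQD.eventually_all]
      intro g _
      have h1 : Tendsto (fun n => g • S.f^[n] x) atTop (𝓝 (g • S.x₀)) :=
        ((S.cont_smul g).tendsto _).comp (S.AN x)
      rw [S.smul_zero] at h1
      exact (Metric.tendsto_nhds.1 h1) S.ε hε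
    obtain ⟨n, hn⟩ := this.exists
    exact Set.mem_iUnion.2 ⟨n, hn⟩
  obtain ⟨t, ht⟩ := isCompact_univ.elim_finite_subcover U hU hcov
  refine ⟨t.sup id + N, fun x => S.eq_zero ?_⟩
  ext g
  simp only [Set.mem_empty_iff_false, iff_false]
  rw [notMem_supp, ← S.iter_eq]
  obtain ⟨m, hm, hmx⟩ := Set.mem_iUnion₂.1 (ht (Set.mem_univ (g • x)))
  have hle : m ≤ t.sup id := Finset.le_sup (f := id) hm
  have := hgood (S.f^[m] (g • x)) (fun g hg => (hmx g hg).le) (t.sup id + N - m) (by omega)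
  rw [← Function.iterate_add_apply] at this
  have he : t.sup id + N - m + m = t.sup id + N := by omega
  rwa [he] at this

open Classical in
theorem exists_sys (hcont : ∀ g : G, Continuous fun x : X => g • x)
    (x₀ : X) (hx₀ : ∀ g : G, g • x₀ = x₀)
    (hexp : ∃ Δ : ℝ, 0 < Δ ∧
      ∀ x y : X, (∀ g : G, dist (g • x) (g • y) ≤ Δ) → x = y)
    (hglue : ZeroGluing G x₀)
    (f : X → X) (hf : Continuous f) (hf₀ : f x₀ = x₀)
    (hfeq : ∀ (g : G) (x : X), f (g • x) = g • f x)
    (hAN : ∀ x : X, Filter.Tendsto (fun n => f^[n] x) Filter.atTop (nhds x₀)) :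
    ∃ S : NSys G X, S.x₀ = x₀ ∧ S.f = f := by
  obtain ⟨Δ, hΔ, hexp⟩ := hexp
  have he : 0 < Δ / 4 := by linarith
  obtain ⟨η, hη, hηf⟩ := Metric.uniformContinuous_iff.1
    (CompactSpace.uniformContinuous_of_continuous hf) (Δ / 4 / 2) (by linarith)
  obtain ⟨δ, hδ, E, hE⟩ := hglue (Δ / 4) he
  obtain ⟨B, hB, hBu⟩ := unifexp_gen hcont hexp (η := min η (min (Δ / 4 / 2) δ))
    (lt_min hη (lt_min (by linarith) hδ))
  set Q : Set G := ({1} ∪ ↑E ∪ B) ∪ ({1} ∪ ↑E ∪ B)⁻¹ with hQ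
  have hQ0 : ({1} ∪ (E : Set G) ∪ B).Finite :=
    ((Set.finite_singleton 1).union E.finite_toSet).union hB
  have hQB : ∀ x y : X, (∀ q ∈ Q, dist (q • x) (q • y) ≤ Δ) → dist x y < min η (min (Δ / 4 / 2) δ) :=
    fun x y h => hBu x y fun g hg => h g (Or.inl (Or.inr hg))
  have h4 : 4 * (Δ / 4) = Δ := by ring
  refine ⟨⟨x₀, f, Δ / 4, Q, he, hcont, hx₀, hf, hf₀, hfeq, hAN, by rwa [h4],
    hQ0.union hQ0.inv, Or.inl (Or.inl (Or.inl rfl)), ?_, ?_, ?_⟩, rfl, rfl⟩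
  · rintro q (hq | hq)
    · exact Or.inr (Set.inv_mem_inv.2 hq)
    · exact Or.inl hq
  · intro x y h
    rw [h4] at h
    have := hQB x y h
    rw [lt_min_iff, lt_min_iff] at this
    exact ⟨this.2.1.le, (hηf this.1).le⟩
  · intro I a p hc
    obtain ⟨y, hy⟩ := hE I (fun i => {g | a g = i}) p (fun g => ⟨a g, rfl, fun j hj => hj.symm⟩) (by
      rintro i g rfl ⟨e, heE, hne⟩
      rcases hc g with h | h
      · exact absurd (h e (Or.inl (Or.inl (Or.inr heE)))) hne
      · have := hQB (g • p (a g)) x₀ (fun q hq => by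
          have := h q hq 1 (Or.inl (Or.inl (Or.inl rfl)))
          rw [one_mul, mul_smul] at this
          rw [hx₀]; linarith)
        rw [lt_min_iff, lt_min_iff] at this
        exact this.2.2)
    exact ⟨y, fun g => (hy (a g) g rfl).le⟩

end NSys

end NSysProof

/-- Main Theorem: Let `G` be a group whose finitely generated subgroups
are residually finite and have subnormal series with locally virtually abelian
quotients. Let `(G, X, 0)` be an expansive `0`-gluing pointed dynamical system with
dense homoclinic points. Then every asymptotically nilpotent endomorphism of the
system is nilpotent. -/
theorem statement11 {G X : Type} [Group G] [MetricSpace X] [CompactSpace X]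
    [MulAction G X]
    (hcont : ∀ g : G, Continuous fun x : X => g • x)
    (x₀ : X) (hx₀ : ∀ g : G, g • x₀ = x₀)
    (hgroup : ∀ H : Subgroup G, H.FG →
      ResiduallyFinite H ∧ HasLVASubnormalSeries H)
    (hexp : ∃ Δ : ℝ, 0 < Δ ∧
      ∀ x y : X, (∀ g : G, dist (g • x) (g • y) ≤ Δ) → x = y)
    (hglue : ZeroGluing G x₀)
    (hhomo : Dense {x : X | Homoclinic G x₀ x})
    (f : X → X) (hf : Continuous f) (hf₀ : f x₀ = x₀)
    (hfeq : ∀ (g : G) (x : X), f (g • x) = g • f x)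
    (hAN : ∀ x : X, Filter.Tendsto (fun n => f^[n] x) Filter.atTop (nhds x₀)) :
    ∃ n : ℕ, ∀ x : X, f^[n] x = x₀ := by
  obtain ⟨S, rfl, rfl⟩ := NSys.exists_sys hcont x₀ hx₀ hexp hglue f hf hf₀ hfeq hAN
  exact S.nilpotent hgroup hhomo
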